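/- Let S be a special schema and let u be a variable. Then for every predicate symbol p of S that has a labelled occurrence in Need_S(u), there exists a pu-couple for S. -/

import Mathlib

/-!
Call a predicate symbol relevant if it has a `pu`-couple (`Rel`). By induction over `Need`, every
needed predicate is relevant, and every needed assignment feeds, along some path, a relevant
predicate or the final value of `u` (`Useful`). Data dependence passes this on by splicing paths at
a common labelled symbol (`splice`). Everything else is control: if `p` controls a relevant
predicate or a useful assignment, then `p` is relevant.

General tools. In a free schema no predicate term is tested twice along a path (`noRepeat`), so an
interpretation whose loop tests hold finitely often terminates (`exists_run`); changing such an
interpretation one term at a time shows that two terminating interpretations with different final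
values of `u` differ on a relevant predicate (`hop`). In a free liberal schema two continuations of
a common head that create equal terms already create equal terms from the natural state (`cancel`).
Consequently the two tails of a couple can be attached to any head leading to the same predicate and
give a couple again (`TailPair.realise`).

If `p` controls the relevant predicate `q`, fixing `p` to the value that bypasses `q` makes both
sides of a `q`-couple end with the same value of `u`, so by `hop` the predicate `p` is relevant
(`rel_of_controls`).

Suppose that `p` is irrelevant and guards a statement `N` assigning a variable `v` on which, after
a segment `μ`, a relevant test `q` depends. With `μ` shortest, no relevant test inside `μ` depends on
`N`. There are two paths `α`, `β` through `N` giving `v` different values, with `β` obeying a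
prescribed interpretation except at `p` (`node_paths`; here the condition on the two parts of an
if-statement enters). Realise a tail pair for `q` after `α` and change only irrelevant predicates
so that the runs take `β` instead. The final values of `u` do not change (`mix_value`), yet the
runs now test a different term at the end of `μ`. Hence they part only later, when they test the
old term of `q`, after passing once more through a loop outside `N`. All terms outside `N` made true
on the way were already made true by the old tails, so the new tails make strictly fewer such terms
true (`feed_descent`), and infinite descent gives a contradiction (`no_feed`). If instead `N` feeds
the final value of `u`, the rerouting itself contradicts `hop` (`no_feed_final`).
-/

/-!
Common formalization of program schemas (Danicic–Hierons–Laurence):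
letters/paths, Herbrand semantics, freeness, liberality, subschemas,
data/control dependence, Weiser's set `Need`, slices and couples.
Function symbols, predicate symbols, variables and labels are all
modelled by `ℕ` (function and predicate symbols kept disjoint by
construction of the syntax).
-/

namespace SchemaSlicing

/-- Letters of the alphabet Λ(S): assignment letters `y := f^(l)(args)` and
predicate letters `⟨p^(l)(args), b⟩`. -/
inductive Letter : Type
  | asn (y : ℕ) (f : ℕ) (l : ℕ) (args : List ℕ)
  | prd (p : ℕ) (l : ℕ) (args : List ℕ) (b : Bool)
  deriving DecidableEq

/-- Program schemas. -/
inductive Schema : Type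
  | skip
  | assign (y : ℕ) (f : ℕ) (l : ℕ) (args : List ℕ)
  | seq (S₁ S₂ : Schema)
  | ite (p : ℕ) (l : ℕ) (args : List ℕ) (Tt Tf : Schema)
  | whil (p : ℕ) (l : ℕ) (args : List ℕ) (body : Schema)

/-- Complete paths of a while loop iterated `n` times. -/
def whileIter (p l : ℕ) (args : List ℕ) (B : Set (List Letter)) : ℕ → Set (List Letter)
  | 0 => {[Letter.prd p l args false]}
  | n + 1 => {σ | ∃ x ∈ B, ∃ y ∈ whileIter p l args B n, σ = Letter.prd p l args true :: (x ++ y)}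

/-- The set Π(S) of complete paths through a schema. -/
def Paths : Schema → Set (List Letter)
  | .skip => {[]}
  | .assign y f l args => {[Letter.asn y f l args]}
  | .seq S₁ S₂ => {σ | ∃ x ∈ Paths S₁, ∃ y ∈ Paths S₂, σ = x ++ y}
  | .ite p l args Tt Tf =>
      {σ | (∃ x ∈ Paths Tt, σ = Letter.prd p l args true :: x) ∨
           (∃ x ∈ Paths Tf, σ = Letter.prd p l args false :: x)}
  | .whil p l args body => {σ | ∃ n, σ ∈ whileIter p l args (Paths body) n}

/-- pre(Π(S)): finite prefixes of complete paths. -/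
def PrePaths (S : Schema) : Set (List Letter) := {σ | ∃ τ, σ <+: τ ∧ τ ∈ Paths S}

/-- μ is a path-segment of S. -/
def PathSegment (S : Schema) (μ : List Letter) : Prop := ∃ a b, a ++ μ ++ b ∈ Paths S

/-- μ is a terminal path-segment of S. -/
def TerminalSegment (S : Schema) (μ : List Letter) : Prop := ∃ a, a ++ μ ∈ Paths S

/-- An interpretation over a domain `D`. -/
structure Interp (D : Type) where
  fn : ℕ → List D → D
  pr : ℕ → List D → Bool

/-- One execution step on states. -/
def stepL {D : Type} (I : Interp D) (d : ℕ → D) : Letter → (ℕ → D)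
  | .asn y f _ args => Function.update d y (I.fn f (args.map d))
  | .prd _ _ _ _ => d

/-- `M[σ]^I_d`: the state after executing the assignment letters of σ from d. -/
def execP {D : Type} (I : Interp D) (d : ℕ → D) (σ : List Letter) : ℕ → D :=
  σ.foldl (stepL I) d

/-- σ is consistent with the interpretation `I` from initial state `d`:
every predicate letter along σ is evaluated according to `I`. -/
def Agrees {D : Type} (I : Interp D) (d : ℕ → D) (σ : List Letter) : Prop :=
  ∀ τ p l args b, τ ++ [Letter.prd p l args b] <+: σ →
    I.pr p (args.map (execP I d τ)) = b

/-- σ is the (terminating) path `π_S(I,d)`. -/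
def TermRun {D : Type} (S : Schema) (I : Interp D) (d : ℕ → D) (σ : List Letter) : Prop :=
  σ ∈ Paths S ∧ Agrees I d σ

/-- `M[S]^I_d ≠ ⊥`. -/
def Terminates {D : Type} (S : Schema) (I : Interp D) (d : ℕ → D) : Prop :=
  ∃ σ, TermRun S I d σ

/-- Terms over function symbols and variables (the Herbrand domain). -/
inductive Trm : Type
  | var : ℕ → Trm
  | app : ℕ → List Trm → Trm

/-- A Herbrand interpretation is determined by its predicate part. -/
abbrev HInterp := ℕ → List Trm → Bool

/-- The Herbrand interpretation with predicate part `h`. -/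
def herb (h : HInterp) : Interp Trm := ⟨Trm.app, h⟩

/-- The natural state `e`. -/
def eSt : ℕ → Trm := Trm.var

/-- `M[σ]_e`: Herbrand execution of the assignment letters of σ from e. -/
def hexec (σ : List Letter) : ℕ → Trm := execP (herb fun _ _ => false) eSt σ

/-- σ is consistent with the Herbrand interpretation `i` from `e`. -/
def hAgrees (i : HInterp) (σ : List Letter) : Prop := Agrees (herb i) eSt σ

/-- A schema is free if every prefix of a complete path is a prefix of
`π_S(i,e)` for some Herbrand interpretation i. -/
def Free (S : Schema) : Prop := ∀ σ ∈ PrePaths S, ∃ i : HInterp, hAgrees i σ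

/-- A schema is liberal if along any executable path (from `e`, under a
Herbrand interpretation) no two assignments produce the same term. -/
def Liberal (S : Schema) : Prop :=
  ∀ (i : HInterp) (μ ν : List Letter) (y f l args w g m brgs),
    (μ ++ Letter.asn y f l args :: (ν ++ [Letter.asn w g m brgs])) ∈ PrePaths S →
    hAgrees i (μ ++ Letter.asn y f l args :: (ν ++ [Letter.asn w g m brgs])) →
    hexec (μ ++ [Letter.asn y f l args]) y ≠
      hexec (μ ++ Letter.asn y f l args :: (ν ++ [Letter.asn w g m brgs])) w

/-- Labelled symbols: labelled function symbols and labelled predicate symbols. -/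
inductive LSym : Type
  | fn (f l : ℕ)
  | pr (p l : ℕ)
  deriving DecidableEq

/-- The set of labelled symbols occurring in a schema. -/
def lsymSet : Schema → Set LSym
  | .skip => ∅
  | .assign _ f l _ => {LSym.fn f l}
  | .seq a b => lsymSet a ∪ lsymSet b
  | .ite p l _ t e => insert (LSym.pr p l) (lsymSet t ∪ lsymSet e)
  | .whil p l _ b => insert (LSym.pr p l) (lsymSet b)

/-- Number of occurrences of a labelled symbol in a schema. -/
def lsymCount : Schema → LSym → ℕ
  | .skip, _ => 0
  | .assign _ f l _, x => if x = LSym.fn f l then 1 else 0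
  | .seq a b, x => lsymCount a x + lsymCount b x
  | .ite p l _ t e, x => (if x = LSym.pr p l then 1 else 0) + lsymCount t x + lsymCount e x
  | .whil p l _ b, x => (if x = LSym.pr p l then 1 else 0) + lsymCount b x

/-- Standing convention: distinct occurrences of the same symbol carry distinct labels. -/
def WellLabelled (S : Schema) : Prop := ∀ x, lsymCount S x ≤ 1

/-- Number of occurrences of a predicate symbol in a schema. -/
def predCount : Schema → ℕ → ℕ
  | .skip, _ => 0
  | .assign _ _ _ _, _ => 0
  | .seq a b, p => predCount a p + predCount b p
  | .ite q _ _ t e, p => (if q = p then 1 else 0) + predCount t p + predCount e p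
  | .whil q _ _ b, p => (if q = p then 1 else 0) + predCount b p

/-- No predicate symbol occurs more than once. -/
def PredLinear (S : Schema) : Prop := ∀ p, predCount S p ≤ 1

/-- `Occurs T S`: T occurs as a subtree (statement) of S. -/
inductive Occurs : Schema → Schema → Prop
  | refl (S : Schema) : Occurs S S
  | seqL {S T U : Schema} : Occurs S T → Occurs S (.seq T U)
  | seqR {S T U : Schema} : Occurs S U → Occurs S (.seq T U)
  | iteT {S t e : Schema} {p l args} : Occurs S t → Occurs S (.ite p l args t e)
  | iteF {S t e : Schema} {p l args} : Occurs S e → Occurs S (.ite p l args t e)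
  | whilB {S b : Schema} {p l args} : Occurs S b → Occurs S (.whil p l args b)

/-- The schema contains an assignment to the variable v. -/
def AssignsTo : Schema → ℕ → Prop
  | .skip, _ => False
  | .assign y _ _ _, v => y = v
  | .seq a b, v => AssignsTo a v ∨ AssignsTo b v
  | .ite _ _ _ t e, v => AssignsTo t v ∨ AssignsTo e v
  | .whil _ _ _ b, v => AssignsTo b v

/-- The schema contains an assignment `v := f(...)`. -/
def AssignsWith : Schema → ℕ → ℕ → Prop
  | .skip, _, _ => False
  | .assign y g _ _, f, v => g = f ∧ y = v
  | .seq a b, f, v => AssignsWith a f v ∨ AssignsWith b f v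
  | .ite _ _ _ t e, f, v => AssignsWith t f v ∨ AssignsWith e f v
  | .whil _ _ _ b, f, v => AssignsWith b f v

/-- If a function symbol occurs in assignments in both parts of an if
predicate, then those assignments assign to distinct variables. -/
def IfPartsCondition (S : Schema) : Prop :=
  ∀ p l args t e, Occurs (Schema.ite p l args t e) S →
    ∀ f v, AssignsWith t f v → AssignsWith e f v → False

/-- Special schemas: (well-labelled,) predicate-linear, free, liberal,
satisfying the condition on the two parts of each if predicate. -/
def Special (S : Schema) : Prop :=
  WellLabelled S ∧ PredLinear S ∧ Free S ∧ Liberal S ∧ IfPartsCondition S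

/-- `Subschema T S`: T is obtained from S by deleting statements. -/
inductive Subschema : Schema → Schema → Prop
  | skip (S : Schema) : Subschema .skip S
  | refl (S : Schema) : Subschema S S
  | seqL (S₁ S₂ : Schema) : Subschema S₁ (.seq S₁ S₂)
  | seqR (S₁ S₂ : Schema) : Subschema S₂ (.seq S₁ S₂)
  | seqCongrL {S' S : Schema} (T : Schema) :
      Subschema S' S → Subschema (.seq S' T) (.seq S T)
  | seqCongrR {T' T : Schema} (S : Schema) :
      Subschema T' T → Subschema (.seq S T') (.seq S T)
  | whilCongr {T' T : Schema} (p l : ℕ) (args : List ℕ) :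
      Subschema T' T → Subschema (.whil p l args T') (.whil p l args T)
  | iteCongrT {T' T : Schema} (p l : ℕ) (args : List ℕ) (E : Schema) :
      Subschema T' T → Subschema (.ite p l args T' E) (.ite p l args T E)
  | iteCongrF {E' E : Schema} (p l : ℕ) (args : List ℕ) (T : Schema) :
      Subschema E' E → Subschema (.ite p l args T E') (.ite p l args T E)
  | trans {A B C : Schema} : Subschema A B → Subschema B C → Subschema A C

/-- T is a u-slice of S (u a variable): over every domain, state and
interpretation, if S terminates then T terminates with the same final value of u. -/
def IsUSlice (S T : Schema) (u : ℕ) : Prop :=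
  ∀ (D : Type) (I : Interp D) (d : ℕ → D),
    Terminates S I d →
      Terminates T I d ∧
      ∀ σ τ, TermRun S I d σ → TermRun T I d τ → execP I d σ u = execP I d τ u

/-- T is an ω-slice of S: S and T have the same termination behaviour. -/
def IsOmegaSlice (S T : Schema) : Prop :=
  ∀ (D : Type) (I : Interp D) (d : ℕ → D), Terminates S I d ↔ Terminates T I d

/-- `IsFTrm F t`: t is an F-term, for a (nonempty) word F of function symbols. -/
inductive IsFTrm : List ℕ → Trm → Prop
  | base (f : ℕ) (ts : List Trm) : IsFTrm [f] (.app f ts)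
  | step {F : List ℕ} {t : Trm} (g : ℕ) {ts : List Trm} :
      t ∈ ts → IsFTrm F t → IsFTrm (F ++ [g]) (.app g ts)

/-- `IsVFTrm v F t`: t is a vF-term. -/
inductive IsVFTrm (v : ℕ) : List ℕ → Trm → Prop
  | base : IsVFTrm v [] (.var v)
  | step {F : List ℕ} {t : Trm} (g : ℕ) {ts : List Trm} :
      t ∈ ts → IsVFTrm v F t → IsVFTrm v (F ++ [g]) (.app g ts)

/-- The function symbol f occurs in the term t. -/
inductive OccIn (f : ℕ) : Trm → Prop
  | here (ts : List Trm) : OccIn f (.app f ts)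
  | there {g : ℕ} {ts : List Trm} {t : Trm} : t ∈ ts → OccIn f t → OccIn f (.app g ts)

/-- Labelled terms: applications additionally record the label of the
assignment that created them. -/
inductive LTrm : Type
  | var : ℕ → LTrm
  | app : ℕ → ℕ → List LTrm → LTrm

def lStep (d : ℕ → LTrm) : Letter → (ℕ → LTrm)
  | .asn y f l args => Function.update d y (LTrm.app f l (args.map d))
  | .prd _ _ _ _ => d

/-- Labelled Herbrand execution from e. -/
def lexec (σ : List Letter) : ℕ → LTrm := σ.foldl lStep LTrm.var

/-- F-terms for words F of labelled function symbols. -/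
inductive IsFLTrm : List (ℕ × ℕ) → LTrm → Prop
  | base (f l : ℕ) (ts : List LTrm) : IsFLTrm [(f, l)] (.app f l ts)
  | step {F : List (ℕ × ℕ)} {t : LTrm} (g m : ℕ) {ts : List LTrm} :
      t ∈ ts → IsFLTrm F t → IsFLTrm (F ++ [(g, m)]) (.app g m ts)

/-- `f^(l) ⤳ u` for a variable u. -/
def DepFV (S : Schema) (fl : ℕ × ℕ) (u : ℕ) : Prop :=
  ∃ σ, TerminalSegment S σ ∧ IsFLTrm [fl] (lexec σ u)

/-- `f^(l) ⤳ g^(m)` for labelled function symbols. -/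
def DepFF (S : Schema) (fl gm : ℕ × ℕ) : Prop :=
  ∃ σ, PathSegment S σ ∧ ∃ w, IsFLTrm [fl, gm] (lexec σ w)

/-- `f^(l) ⤳ q^(m)` for a labelled predicate. -/
def DepFP (S : Schema) (fl : ℕ × ℕ) (q m : ℕ) : Prop :=
  ∃ σ args Z, PathSegment S (σ ++ [Letter.prd q m args Z]) ∧
    ∃ w ∈ args, IsFLTrm [fl] (lexec σ w)

/-- `f^(l) ⤳ x` for a labelled symbol x. -/
def DepFX (S : Schema) (fl : ℕ × ℕ) : LSym → Prop
  | .fn g m => DepFF S fl (g, m)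
  | .pr q m => DepFP S fl q m

/-- The labelled predicate `p^(l)` controls the labelled symbol x in S. -/
def ControlsL (S : Schema) (p l : ℕ) (x : LSym) : Prop :=
  (∃ args t e, Occurs (Schema.ite p l args t e) S ∧ (x ∈ lsymSet t ∨ x ∈ lsymSet e)) ∨
  (∃ args b, Occurs (Schema.whil p l args b) S ∧ x ∈ lsymSet b)

/-- `p^(l)` is a while predicate of S. -/
def IsWhilePred (S : Schema) (p l : ℕ) : Prop :=
  ∃ args b, Occurs (Schema.whil p l args b) S

/-- Slicing criteria: a variable, or termination (ω). -/
inductive Crit : Type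
  | var : ℕ → Crit
  | omega

/-- Weiser's labelled symbol set `Need_S(u)`. -/
inductive Need (S : Schema) : Crit → LSym → Prop
  | ofVar {v f l : ℕ} : DepFV S (f, l) v → Need S (.var v) (.fn f l)
  | ofOmega {p l : ℕ} : IsWhilePred S p l → Need S .omega (.pr p l)
  | ofDep {u : Crit} {f l : ℕ} {x : LSym} :
      Need S u x → DepFX S (f, l) x → Need S u (.fn f l)
  | ofControl {u : Crit} {p l : ℕ} {x : LSym} :
      Need S u x → ControlsL S p l x → Need S u (.pr p l)

/-- `{i,j}` is a p(ts)-couple: i and j differ at the predicate term p(ts)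
and agree on every other predicate term. -/
def PTCouple (p : ℕ) (ts : List Trm) (i j : HInterp) : Prop :=
  i p ts ≠ j p ts ∧ ∀ q ss, (q, ss) ≠ (p, ts) → i q ss = j q ss

/-- `{i,j}` is a p(ts)u-couple for S. -/
def PTUCouple (S : Schema) (p : ℕ) (ts : List Trm) (u : ℕ) (i j : HInterp) : Prop :=
  PTCouple p ts i j ∧
  ∃ σ τ, TermRun S (herb i) eSt σ ∧ TermRun S (herb j) eSt τ ∧ hexec σ u ≠ hexec τ u

/-- `{i,j}` is a pu-couple for S. -/
def PUCouple (S : Schema) (p u : ℕ) (i j : HInterp) : Prop :=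
  ∃ ts, PTUCouple S p ts u i j

/-- `{i,j}` is a pω-couple for S: a p-couple such that exactly one of the
two runs terminates. -/
def POmegaCouple (S : Schema) (p : ℕ) (i j : HInterp) : Prop :=
  ∃ ts, PTCouple p ts i j ∧
    Xor' (Terminates S (herb i) eSt) (Terminates S (herb j) eSt)

/-- A `p^(l)u`-couple for S presented with its divergence data: the common
prefix `head` (the head of the couple), the argument vector of `p^(l)` at the
divergence point, and the two tails. -/
def LPUCoupleData (S : Schema) (p l u : ℕ) (i j : HInterp)
    (head : List Letter) (args : List ℕ) (ρt ρf : List Letter) : Prop :=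
  PTCouple p (args.map (hexec head)) i j ∧
  TermRun S (herb i) eSt (head ++ Letter.prd p l args true :: ρt) ∧
  TermRun S (herb j) eSt (head ++ Letter.prd p l args false :: ρf) ∧
  hexec (head ++ Letter.prd p l args true :: ρt) u ≠
    hexec (head ++ Letter.prd p l args false :: ρf) u

/-- A (p,X)-link in S. -/
def PLink (S : Schema) (p : ℕ) (X : Bool) (ν : List Letter) : Prop :=
  (∃ l args t e, Occurs (Schema.ite p l args t e) S ∧
     ∃ π ∈ Paths (if X then t else e), ν = Letter.prd p l args X :: π) ∨
  (∃ l args b, Occurs (Schema.whil p l args b) S ∧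
     ((X = false ∧ ν = [Letter.prd p l args false]) ∨
      (X = true ∧ ∃ π ∈ Paths b, ∃ ρ ∈ Paths (Schema.whil p l args b),
        ν = Letter.prd p l args true :: (π ++ ρ))))

/-- The path-segment μ v-feeds p to q in S. -/
def VFeeds (S : Schema) (v p q : ℕ) (μ : List Letter) : Prop :=
  ∃ X ν, PLink S p X ν ∧ ∃ m args, PathSegment S (ν ++ μ ++ [Letter.prd q m args true]) ∧
    ∃ w ∈ args, ∃ F, IsVFTrm v F (hexec μ w)

/-- There is an assignment to v in the body (while) or in the true or
false part (if) of the predicate p in S. -/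
def AssignInPart (S : Schema) (p v : ℕ) : Prop :=
  (∃ l args t e, Occurs (Schema.ite p l args t e) S ∧ (AssignsTo t v ∨ AssignsTo e v)) ∨
  (∃ l args b, Occurs (Schema.whil p l args b) S ∧ AssignsTo b v)

/-- The (unlabelled) symbol of a letter (function symbols and predicate
symbols kept disjoint via a sum). -/
def symOf : Letter → Sum ℕ ℕ
  | .asn _ f _ _ => .inl f
  | .prd p _ _ _ => .inr p

/-- The labelled symbol of a letter. -/
def lsymOf : Letter → LSym
  | .asn _ f l _ => .fn f l
  | .prd p l _ _ => .pr p l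

/-- The vector of variables referenced by a letter. -/
def refsOf : Letter → List ℕ
  | .asn _ _ _ args => args
  | .prd _ _ args _ => args

/-- Statements of predicate-free schemas. -/
inductive PFStmt : Type
  | skip
  | asn (y : ℕ) (f : ℕ) (args : List ℕ)
  deriving DecidableEq

/-- A predicate-free schema is a finite sequence of skips and assignments. -/
abbrev PFS := List PFStmt

def pfStep (d : ℕ → Trm) : PFStmt → (ℕ → Trm)
  | .skip => d
  | .asn y f args => Function.update d y (Trm.app f (args.map d))

/-- Execution of a predicate-free schema from a state d. -/
def pfExecFrom (d : ℕ → Trm) (U : PFS) : ℕ → Trm := U.foldl pfStep d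

/-- `M[U]_e` for a predicate-free schema. -/
def pfExec (U : PFS) : ℕ → Trm := pfExecFrom eSt U

/-- A predicate-free schema is liberal: executed from e, no two of its
assignments produce equal term values. -/
def PFLiberal (U : PFS) : Prop :=
  ∀ A y f args B w g brgs C,
    U = A ++ PFStmt.asn y f args :: (B ++ PFStmt.asn w g brgs :: C) →
    pfExec (A ++ [PFStmt.asn y f args]) y ≠
      pfExec (A ++ PFStmt.asn y f args :: (B ++ [PFStmt.asn w g brgs])) w

end SchemaSlicing

namespace SchemaSlicing

/-! ### Terms and execution -/

mutual
/-- Simultaneous substitution of terms for variables. -/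
def Trm.subst (θ : ℕ → Trm) : Trm → Trm
  | .var v => θ v
  | .app f ts => .app f (Trm.substL θ ts)
/-- Substitution applied to each entry of a list of terms. -/
def Trm.substL (θ : ℕ → Trm) : List Trm → List Trm
  | [] => []
  | t :: ts => Trm.subst θ t :: Trm.substL θ ts
end

theorem substL_eq_map (θ : ℕ → Trm) (ts : List Trm) :
    Trm.substL θ ts = ts.map (Trm.subst θ) := by
  induction ts with
  | nil => simp [Trm.substL]
  | cons t ts ih => simp [Trm.substL, ih]

/-- The variable `z` occurs in a term. -/
inductive VarIn (z : ℕ) : Trm → Prop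
  | here : VarIn z (.var z)
  | there {g : ℕ} {ts : List Trm} {t : Trm} : t ∈ ts → VarIn z t → VarIn z (.app g ts)

theorem VarIn.subst_ne {z : ℕ} {t : Trm} (h : VarIn z t) {θ η : ℕ → Trm} (hne : θ z ≠ η z) :
    t.subst θ ≠ t.subst η := by
  induction h with
  | here => simpa [Trm.subst] using hne
  | there hm _ ih =>
    intro he
    simp only [Trm.subst, substL_eq_map, Trm.app.injEq, true_and] at he
    exact ih (List.map_inj_left.1 he _ hm)

theorem VarIn.subst {z v : ℕ} {t : Trm} (h : VarIn v t) {θ : ℕ → Trm} (hz : VarIn z (θ v)) :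
    VarIn z (t.subst θ) := by
  induction h with
  | here => simpa [Trm.subst] using hz
  | there hm _ ih =>
    simp only [Trm.subst, substL_eq_map]
    exact .there (List.mem_map_of_mem hm) ih

mutual
theorem VarIn.of_subst {z : ℕ} {θ : ℕ → Trm} :
    ∀ (t : Trm), VarIn z (t.subst θ) → ∃ v, VarIn v t ∧ VarIn z (θ v)
  | .var v, h => ⟨v, .here, by simpa [Trm.subst] using h⟩
  | .app f ts, h => by
    simp only [Trm.subst] at h
    cases h with
    | there hm h' =>
      obtain ⟨t, ht, v, h1, h2⟩ := VarIn.of_substL ts _ hm h'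
      exact ⟨v, .there ht h1, h2⟩
theorem VarIn.of_substL {z : ℕ} {θ : ℕ → Trm} :
    ∀ (ts : List Trm) (s : Trm), s ∈ Trm.substL θ ts → VarIn z s →
      ∃ t ∈ ts, ∃ v, VarIn v t ∧ VarIn z (θ v)
  | [], s, hs, _ => by simp [Trm.substL] at hs
  | t :: ts, s, hs, h => by
    simp only [Trm.substL, List.mem_cons] at hs
    rcases hs with rfl | hs
    · obtain ⟨v, hv⟩ := VarIn.of_subst t h
      exact ⟨t, by simp, v, hv⟩
    · obtain ⟨t', ht', hv⟩ := VarIn.of_substL ts s hs h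
      exact ⟨t', by simp [ht'], hv⟩
end

mutual
theorem subst_congr {θ η : ℕ → Trm} :
    ∀ (t : Trm), (∀ v, VarIn v t → θ v = η v) → t.subst θ = t.subst η
  | .var v, h => by simpa [Trm.subst] using h v .here
  | .app f ts, h => by
    simp only [Trm.subst, Trm.app.injEq, true_and]
    exact substL_congr ts fun t ht v hv => h v (.there ht hv)
theorem substL_congr {θ η : ℕ → Trm} :
    ∀ (ts : List Trm), (∀ t ∈ ts, ∀ v, VarIn v t → θ v = η v) →
      Trm.substL θ ts = Trm.substL η ts
  | [], _ => rfl
  | t :: ts, h => by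
    simp only [Trm.substL, List.cons.injEq]
    exact ⟨subst_congr t (h t (by simp)), substL_congr ts fun s hs => h s (by simp [hs])⟩
end

theorem execP_herb (i : HInterp) (σ : List Letter) : execP (herb i) eSt σ = hexec σ := by
  unfold hexec execP
  congr 1

@[simp] theorem hexec_nil : hexec [] = Trm.var := rfl

@[simp] theorem hexec_snoc_prd (σ : List Letter) (p l : ℕ) (args : List ℕ) (b : Bool) :
    hexec (σ ++ [Letter.prd p l args b]) = hexec σ := by
  simp [hexec, execP, stepL]

theorem hexec_snoc_asn (σ : List Letter) (y f l : ℕ) (args : List ℕ) :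
    hexec (σ ++ [Letter.asn y f l args]) =
      Function.update (hexec σ) y (Trm.app f (args.map (hexec σ))) := by
  simp [hexec, execP, stepL, herb]

@[simp] theorem hexec_cons_prd (σ : List Letter) (p l : ℕ) (args : List ℕ) (b : Bool) :
    hexec (Letter.prd p l args b :: σ) = hexec σ := rfl

theorem hexec_append (ρ x : List Letter) (v : ℕ) :
    hexec (ρ ++ x) v = (hexec x v).subst (hexec ρ) := by
  induction x using List.reverseRecOn generalizing v with
  | nil => simp [Trm.subst]
  | append_singleton x a ih =>
    rw [← List.append_assoc]
    cases a with
    | prd p l args b => rw [hexec_snoc_prd, hexec_snoc_prd, ih]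
    | asn y f l args =>
      rw [hexec_snoc_asn, hexec_snoc_asn]
      by_cases h : v = y
      · subst h
        simp only [Function.update_self, Trm.subst, substL_eq_map, List.map_map, Trm.app.injEq,
          true_and]
        exact List.map_congr_left fun w _ => ih w
      · simp [Function.update_of_ne h, ih]

/-- No letter of `σ` assigns to `v`. -/
def NoAsn (σ : List Letter) (v : ℕ) : Prop := ∀ f l args, Letter.asn v f l args ∉ σ

theorem NoAsn.snoc_asn {σ : List Letter} {v y f l : ℕ} {args : List ℕ} (h : NoAsn σ v)
    (hy : v ≠ y) : NoAsn (σ ++ [Letter.asn y f l args]) v := by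
  intro f' l' args' hm
  simp only [List.mem_append, List.mem_singleton, Letter.asn.injEq] at hm
  rcases hm with hm | hm
  · exact h _ _ _ hm
  · exact hy hm.1

theorem NoAsn.snoc_prd {σ : List Letter} {v p l : ℕ} {args : List ℕ} {b : Bool} (h : NoAsn σ v) :
    NoAsn (σ ++ [Letter.prd p l args b]) v := by
  intro f' l' args' hm
  simp only [List.mem_append, List.mem_singleton] at hm
  rcases hm with hm | hm
  · exact h _ _ _ hm
  · cases hm

theorem noAsn_or_last (σ : List Letter) (v : ℕ) :
    NoAsn σ v ∨ ∃ σ₁ f l args σ₂, σ = σ₁ ++ Letter.asn v f l args :: σ₂ ∧ NoAsn σ₂ v := by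
  induction σ using List.reverseRecOn with
  | nil => left; intro f l args h; simp at h
  | append_singleton σ a ih =>
    cases a with
    | asn y f l args =>
      by_cases hy : v = y
      · subst hy
        exact Or.inr ⟨σ, f, l, args, [], rfl, fun _ _ _ h => by simp at h⟩
      · rcases ih with ih | ⟨σ₁, f', l', args', σ₂, rfl, h⟩
        · exact Or.inl (ih.snoc_asn hy)
        · exact Or.inr ⟨σ₁, f', l', args', σ₂ ++ [.asn y f l args], by simp, h.snoc_asn hy⟩
    | prd p l args b =>
      rcases ih with ih | ⟨σ₁, f', l', args', σ₂, rfl, h⟩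
      · exact Or.inl ih.snoc_prd
      · exact Or.inr ⟨σ₁, f', l', args', σ₂ ++ [.prd p l args b], by simp, h.snoc_prd⟩

theorem NoAsn.hexec {σ : List Letter} {v : ℕ} (h : NoAsn σ v) : hexec σ v = Trm.var v := by
  induction σ using List.reverseRecOn with
  | nil => rfl
  | append_singleton σ a ih =>
    have h' : NoAsn σ v := fun f l args hm => h f l args (by simp [hm])
    cases a with
    | prd p l args b => simpa using ih h'
    | asn y f l args =>
      rw [hexec_snoc_asn, Function.update_of_ne, ih h']
      rintro rfl
      exact h f l args (by simp)

theorem NoAsn.hexec_append {σ : List Letter} {v : ℕ} (h : NoAsn σ v) (ρ : List Letter) :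
    SchemaSlicing.hexec (ρ ++ σ) v = SchemaSlicing.hexec ρ v := by
  rw [SchemaSlicing.hexec_append, h.hexec, Trm.subst]

theorem hexec_last {σ₁ σ₂ : List Letter} {v f l : ℕ} {args : List ℕ} (h : NoAsn σ₂ v) :
    hexec (σ₁ ++ Letter.asn v f l args :: σ₂) v = Trm.app f (args.map (hexec σ₁)) := by
  have := h.hexec_append (σ₁ ++ [Letter.asn v f l args])
  rw [List.append_assoc, List.singleton_append] at this
  rw [this, hexec_snoc_asn, Function.update_self]

theorem lexec_snoc_asn (σ : List Letter) (y f l : ℕ) (args : List ℕ) :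
    lexec (σ ++ [Letter.asn y f l args]) =
      Function.update (lexec σ) y (LTrm.app f l (args.map (lexec σ))) := by
  simp [lexec, lStep]

theorem lexec_noAsn {σ : List Letter} {v : ℕ} (h : NoAsn σ v) (ρ : List Letter) :
    lexec (ρ ++ σ) v = lexec ρ v := by
  induction σ using List.reverseRecOn with
  | nil => simp
  | append_singleton σ a ih =>
    have h' : NoAsn σ v := fun f l args hm => h f l args (by simp [hm])
    rw [← List.append_assoc]
    cases a with
    | prd p l args b =>
      rw [← ih h']; simp [lexec, lStep]
    | asn y f l args =>
      rw [lexec_snoc_asn, Function.update_of_ne, ih h']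
      rintro rfl
      exact h f l args (by simp)

/-- A labelled term held by a variable was created by the last assignment to that variable. -/
theorem lexec_app {σ : List Letter} {v f l : ℕ} {ts : List LTrm}
    (h : lexec σ v = LTrm.app f l ts) :
    ∃ σ₁ args σ₂, σ = σ₁ ++ Letter.asn v f l args :: σ₂ ∧ NoAsn σ₂ v ∧
      ts = args.map (lexec σ₁) := by
  rcases noAsn_or_last σ v with hn | ⟨σ₁, f', l', args, σ₂, rfl, hn⟩
  · have := lexec_noAsn hn []
    simp only [List.nil_append] at this
    rw [this] at h
    cases h
  · have := lexec_noAsn hn (σ₁ ++ [Letter.asn v f' l' args])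
    rw [List.append_assoc, List.singleton_append] at this
    rw [this, lexec_snoc_asn, Function.update_self] at h
    cases h
    exact ⟨σ₁, args, σ₂, rfl, hn, rfl⟩

theorem isFLTrm_single {f l : ℕ} {t : LTrm} (h : IsFLTrm [(f, l)] t) :
    ∃ ts, t = LTrm.app f l ts := by
  generalize hF : [(f, l)] = F at h
  cases h with
  | base f' l' ts => simp at hF; obtain ⟨rfl, rfl⟩ := hF; exact ⟨ts, rfl⟩
  | step g m hm h' =>
    rename_i F' t' ts
    have : F' = [] := by
      have := congrArg List.length hF
      simp at this; exact this
    subst this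
    exfalso
    generalize hF' : ([] : List (ℕ × ℕ)) = F'' at h'
    cases h' <;> simp at hF'

theorem isFLTrm_pair {f l g m : ℕ} {t : LTrm} (h : IsFLTrm [(f, l), (g, m)] t) :
    ∃ ts ss, t = LTrm.app g m ts ∧ LTrm.app f l ss ∈ ts := by
  generalize hF : [(f, l), (g, m)] = F at h
  cases h with
  | base f' l' ts => simp at hF
  | step g' m' hm h' =>
    rename_i F' t' ts
    have h2 : [(f, l)] ++ [(g, m)] = F' ++ [(g', m')] := by simpa using hF
    obtain ⟨h3, h4⟩ := List.append_inj' h2 rfl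
    simp at h4
    obtain ⟨rfl, rfl⟩ := h4
    subst h3
    obtain ⟨ss, rfl⟩ := isFLTrm_single h'
    exact ⟨ts, ss, rfl, hm⟩

/-! ### Cancelling a common head -/

theorem PrePaths.of_append {S : Schema} {a b : List Letter} (h : a ++ b ∈ PrePaths S) :
    a ∈ PrePaths S := by
  obtain ⟨τ, h1, h2⟩ := h
  exact ⟨τ, (List.prefix_append a b).trans h1, h2⟩

theorem PrePaths.of_path {S : Schema} {a : List Letter} (h : a ∈ Paths S) : a ∈ PrePaths S :=
  ⟨a, List.prefix_refl a, h⟩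

theorem Liberal.ne {S : Schema} (hF : Free S) (hL : Liberal S) {μ ν ξ : List Letter}
    {y f l : ℕ} {args : List ℕ} {w g m : ℕ} {brgs : List ℕ}
    (h : μ ++ Letter.asn y f l args :: (ν ++ Letter.asn w g m brgs :: ξ) ∈ PrePaths S) :
    Trm.app f (args.map (hexec μ)) ≠
      Trm.app g (brgs.map (hexec (μ ++ Letter.asn y f l args :: ν))) := by
  have h' : μ ++ Letter.asn y f l args :: (ν ++ [Letter.asn w g m brgs]) ∈ PrePaths S := by
    apply PrePaths.of_append (b := ξ); simpa using h
  obtain ⟨i, hi⟩ := hF _ h'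
  have := hL i μ ν y f l args w g m brgs h' hi
  rw [hexec_snoc_asn, Function.update_self] at this
  have e : μ ++ Letter.asn y f l args :: (ν ++ [Letter.asn w g m brgs]) =
    (μ ++ Letter.asn y f l args :: ν) ++ [Letter.asn w g m brgs] := by simp
  rw [e, hexec_snoc_asn, Function.update_self] at this
  exact this

/-- Along a path of a free liberal schema distinct variables hold distinct terms. -/
theorem hexec_injective {S : Schema} (hF : Free S) (hL : Liberal S) {ρ : List Letter}
    (h : ρ ∈ PrePaths S) {v w : ℕ} (he : hexec ρ v = hexec ρ w) : v = w := by
  induction ρ using List.reverseRecOn generalizing v w with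
  | nil => simpa using he
  | append_singleton ρ a ih =>
    have key : ∀ {v y f l : ℕ} {args : List ℕ}, ρ ++ [Letter.asn y f l args] ∈ PrePaths S →
        hexec ρ v ≠ Trm.app f (args.map (hexec ρ)) := by
      intro v y f l args h hv
      rcases noAsn_or_last ρ v with hn | ⟨σ₁, f', l', args', σ₂, rfl, hn⟩
      · rw [hn.hexec] at hv; cases hv
      · rw [hexec_last hn] at hv
        exact Liberal.ne hF hL (ξ := []) (by simpa using h) hv
    cases a with
    | prd p l args b => exact ih (PrePaths.of_append h) (by simpa using he)
    | asn y f l args =>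
      rw [hexec_snoc_asn] at he
      by_cases hv : v = y <;> by_cases hw : w = y
      · rw [hv, hw]
      · subst hv
        rw [Function.update_self, Function.update_of_ne hw] at he
        exact absurd he.symm (key h)
      · subst hw
        rw [Function.update_self, Function.update_of_ne hv] at he
        exact absurd he (key h)
      · rw [Function.update_of_ne hw, Function.update_of_ne hv] at he
        exact ih (PrePaths.of_append h) he

theorem map_eq_map_of_forall {α : Type*} {f g : ℕ → α} {f' g' : ℕ → α}
    (hfg : ∀ v w, f v = g w → f' v = g' w) :
    ∀ {a b : List ℕ}, a.map f = b.map g → a.map f' = b.map g' := by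
  intro a
  induction a with
  | nil => intro b h; cases b <;> simp_all
  | cons x a ih =>
    intro b h
    cases b with
    | nil => simp at h
    | cons y b =>
      simp only [List.map_cons, List.cons.injEq] at h ⊢
      exact ⟨hfg _ _ h.1, ih h.2⟩

/-- Cancellation: in a free liberal schema, two continuations of a common head `ρ` that produce
the same term after `ρ` already produce the same term from the natural state. -/
theorem cancel {S : Schema} (hF : Free S) (hL : Liberal S) {ρ : List Letter} :
    ∀ (n : ℕ) {x y : List Letter}, x.length + y.length ≤ n → ρ ++ x ∈ PrePaths S →
      ρ ++ y ∈ PrePaths S → ∀ v w, hexec (ρ ++ x) v = hexec (ρ ++ y) w →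
      hexec x v = hexec y w := by
  -- a term held after `ρ` is never created again by a continuation of `ρ`
  have key : ∀ {x₁ x₂ : List Letter} {v w f l : ℕ} {args : List ℕ},
      ρ ++ (x₁ ++ Letter.asn v f l args :: x₂) ∈ PrePaths S →
      hexec ρ w ≠ Trm.app f (args.map (hexec (ρ ++ x₁))) := by
    intro x₁ x₂ v w f l args h hv
    rcases noAsn_or_last ρ w with hn | ⟨σ₁, f', l', args', σ₂, rfl, hn⟩
    · rw [hn.hexec] at hv; cases hv
    · rw [hexec_last hn] at hv
      refine Liberal.ne hF hL (μ := σ₁) (ν := σ₂ ++ x₁) (ξ := x₂) (y := w) (f := f') (l := l')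
        (args := args') (w := v) (g := f) (m := l) (brgs := args) (by simpa using h) ?_
      simpa using hv
  intro n
  induction n with
  | zero =>
    intro x y hn hx hy v w he
    obtain rfl : x = [] := List.length_eq_zero_iff.1 (by omega)
    obtain rfl : y = [] := List.length_eq_zero_iff.1 (by omega)
    rw [List.append_nil] at he hx
    rw [hexec_injective hF hL hx he]
  | succ n ih =>
    intro x y hn hx hy v w he
    rcases noAsn_or_last x v with h1 | ⟨x₁, f, l, args, x₂, rfl, h1⟩ <;>
    rcases noAsn_or_last y w with h2 | ⟨y₁, g, m, brgs, y₂, rfl, h2⟩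
    · rw [h1.hexec_append, h2.hexec_append] at he
      rw [h1.hexec, h2.hexec, hexec_injective hF hL (PrePaths.of_append hx) he]
    · rw [h1.hexec_append, ← List.append_assoc, hexec_last h2] at he
      exact absurd he (key hy)
    · rw [h2.hexec_append, ← List.append_assoc, hexec_last h1] at he
      exact absurd he.symm (key hx)
    · rw [← List.append_assoc, ← List.append_assoc, hexec_last h1, hexec_last h2] at he
      rw [hexec_last h1, hexec_last h2]
      rw [Trm.app.injEq] at he ⊢
      refine ⟨he.1, map_eq_map_of_forall (fun v' w' hvw => ?_) he.2⟩
      simp only [List.length_append, List.length_cons] at hn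
      refine ih (by omega) ?_ ?_ v' w' hvw
      · apply PrePaths.of_append (b := Letter.asn v f l args :: x₂); simpa using hx
      · apply PrePaths.of_append (b := Letter.asn w g m brgs :: y₂); simpa using hy

/-! ### Paths and the structure of schemas -/

theorem split_append {α : Type*} {a b s t : List α} {x : α} (h : a ++ x :: b = s ++ t) :
    (∃ c, s = a ++ x :: c ∧ b = c ++ t) ∨ (∃ c, a = s ++ c ∧ t = c ++ x :: b) := by
  rcases List.append_eq_append_iff.1 h with ⟨c, h1, h2⟩ | ⟨c, h1, h2⟩
  · cases c with
    | nil => right; exact ⟨[], by simpa using h1.symm, by simpa using h2.symm⟩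
    | cons y c =>
      simp only [List.cons_append, List.cons.injEq] at h2
      obtain ⟨rfl, h2⟩ := h2
      left; exact ⟨c, h1, h2⟩
  · right; exact ⟨c, h1, h2⟩

theorem lsymCount_pos {S : Schema} {x : LSym} (h : x ∈ lsymSet S) : 0 < lsymCount S x := by
  induction S with
  | skip => exact h.elim
  | assign y f l args => simp only [lsymSet, Set.mem_singleton_iff] at h; simp [lsymCount, h]
  | seq a b iha ihb =>
    simp only [lsymCount]
    rcases h with h | h
    · have := iha h; omega
    · have := ihb h; omega
  | ite p l args t e iht ihe =>
    simp only [lsymCount]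
    rcases h with h | h | h
    · simp [h]
    · have := iht h; omega
    · have := ihe h; omega
  | whil p l args b ih =>
    simp only [lsymCount]
    rcases h with h | h
    · simp [h]
    · have := ih h; omega

theorem Occurs.lsymCount_le {N S : Schema} (h : Occurs N S) (x : LSym) :
    lsymCount N x ≤ lsymCount S x := by
  induction h with
  | refl => exact le_rfl
  | seqL _ ih | seqR _ ih | iteT _ ih | iteF _ ih | whilB _ ih => simp only [lsymCount]; omega

theorem Occurs.lsymSet_subset {N S : Schema} (h : Occurs N S) : lsymSet N ⊆ lsymSet S := by
  induction h with
  | refl => exact fun _ h => h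
  | seqL _ ih => exact fun _ h => Or.inl (ih h)
  | seqR _ ih => exact fun _ h => Or.inr (ih h)
  | iteT _ ih => exact fun _ h => Or.inr (Or.inl (ih h))
  | iteF _ ih => exact fun _ h => Or.inr (Or.inr (ih h))
  | whilB _ ih => exact fun _ h => Or.inr (ih h)

theorem Occurs.trans {A B C : Schema} (h : Occurs A B) (h' : Occurs B C) : Occurs A C := by
  induction h' with
  | refl => exact h
  | seqL _ ih => exact .seqL ih
  | seqR _ ih => exact .seqR ih
  | iteT _ ih => exact .iteT ih
  | iteF _ ih => exact .iteF ih
  | whilB _ ih => exact .whilB ih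

theorem WellLabelled.of_occurs {N S : Schema} (hW : WellLabelled S) (h : Occurs N S) :
    WellLabelled N := fun x => (h.lsymCount_le x).trans (hW x)

theorem WellLabelled.seq_disj {a b : Schema} (h : WellLabelled (.seq a b)) {x : LSym}
    (ha : x ∈ lsymSet a) (hb : x ∈ lsymSet b) : False := by
  have := h x
  simp only [lsymCount] at this
  have := lsymCount_pos ha
  have := lsymCount_pos hb
  omega

theorem WellLabelled.ite_disj {p l : ℕ} {args : List ℕ} {a b : Schema}
    (h : WellLabelled (.ite p l args a b)) {x : LSym}
    (ha : x ∈ lsymSet a) (hb : x ∈ lsymSet b) : False := by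
  have := h x
  simp only [lsymCount] at this
  have := lsymCount_pos ha
  have := lsymCount_pos hb
  omega

theorem WellLabelled.ite_head {p l : ℕ} {args : List ℕ} {a b : Schema}
    (h : WellLabelled (.ite p l args a b)) : LSym.pr p l ∉ lsymSet a ∧ LSym.pr p l ∉ lsymSet b := by
  have := h (.pr p l)
  simp only [lsymCount, if_true] at this
  constructor <;> intro hm <;> have := lsymCount_pos hm <;> omega

theorem WellLabelled.whil_head {p l : ℕ} {args : List ℕ} {b : Schema}
    (h : WellLabelled (.whil p l args b)) : LSym.pr p l ∉ lsymSet b := by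
  have := h (.pr p l)
  simp only [lsymCount, if_true] at this
  intro hm; have := lsymCount_pos hm; omega

theorem predCount_pos {S : Schema} {p l : ℕ} (h : LSym.pr p l ∈ lsymSet S) :
    0 < predCount S p := by
  induction S with
  | skip => exact h.elim
  | assign y f l args => simp [lsymSet] at h
  | seq a b iha ihb =>
    simp only [predCount]
    rcases h with h | h
    · have := iha h; omega
    · have := ihb h; omega
  | ite q m args t e iht ihe =>
    simp only [predCount]
    rcases h with h | h | h
    · cases h; simp
    · have := iht h; omega
    · have := ihe h; omega
  | whil q m args b ih =>
    simp only [predCount]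
    rcases h with h | h
    · cases h; simp
    · have := ih h; omega

theorem PredLinear.label_unique {S : Schema} (hP : PredLinear S) {p l l' : ℕ}
    (h : LSym.pr p l ∈ lsymSet S) (h' : LSym.pr p l' ∈ lsymSet S) : l = l' := by
  have hp := hP p
  clear hP
  induction S with
  | skip => exact h.elim
  | assign y f l args => simp [lsymSet] at h
  | seq a b iha ihb =>
    simp only [predCount] at hp
    rcases h with h | h <;> rcases h' with h' | h'
    · exact iha h h' (by omega)
    · have := predCount_pos h; have := predCount_pos h'; omega
    · have := predCount_pos h; have := predCount_pos h'; omega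
    · exact ihb h h' (by omega)
  | ite q m args t e iht ihe =>
    simp only [predCount] at hp
    rcases h with h | h | h <;> rcases h' with h' | h' | h'
    · cases h; cases h'; rfl
    · cases h; have := predCount_pos h'; simp at hp; omega
    · cases h; have := predCount_pos h'; simp at hp; omega
    · cases h'; have := predCount_pos h; simp at hp; omega
    · exact iht h h' (by omega)
    · have := predCount_pos h; have := predCount_pos h'; omega
    · cases h'; have := predCount_pos h; simp at hp; omega
    · have := predCount_pos h; have := predCount_pos h'; omega
    · exact ihe h h' (by omega)
  | whil q m args b ih =>
    simp only [predCount] at hp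
    rcases h with h | h <;> rcases h' with h' | h'
    · cases h; cases h'; rfl
    · cases h; have := predCount_pos h'; simp at hp; omega
    · cases h'; have := predCount_pos h; simp at hp; omega
    · exact ih h h' (by omega)

theorem whil_path_nil (p l : ℕ) (args : List ℕ) (B : Schema) :
    [Letter.prd p l args false] ∈ Paths (.whil p l args B) := ⟨0, rfl⟩

theorem whil_path_cons {p l : ℕ} {args : List ℕ} {B : Schema} {x y : List Letter}
    (hx : x ∈ Paths B) (hy : y ∈ Paths (.whil p l args B)) :
    Letter.prd p l args true :: (x ++ y) ∈ Paths (.whil p l args B) := by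
  obtain ⟨n, hn⟩ := hy
  exact ⟨n + 1, x, hx, y, hn, rfl⟩

theorem whil_induction {p l : ℕ} {args : List ℕ} {B : Schema} {P : List Letter → Prop}
    (base : P [Letter.prd p l args false])
    (step : ∀ x ∈ Paths B, ∀ y ∈ Paths (.whil p l args B), P y →
      P (Letter.prd p l args true :: (x ++ y))) :
    ∀ σ ∈ Paths (.whil p l args B), P σ := by
  rintro σ ⟨n, hn⟩
  induction n generalizing σ with
  | zero => rw [show σ = _ from hn]; exact base
  | succ n ih =>
    obtain ⟨x, hx, y, hy, rfl⟩ := hn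
    exact step x hx y ⟨n, hy⟩ (ih y hy)

theorem paths_nonempty (S : Schema) : ∃ σ, σ ∈ Paths S := by
  induction S with
  | skip => exact ⟨[], rfl⟩
  | assign y f l args => exact ⟨_, rfl⟩
  | seq a b iha ihb =>
    obtain ⟨x, hx⟩ := iha
    obtain ⟨y, hy⟩ := ihb
    exact ⟨_, x, hx, y, hy, rfl⟩
  | ite p l args t e iht ihe =>
    obtain ⟨x, hx⟩ := iht
    exact ⟨_, Or.inl ⟨x, hx, rfl⟩⟩
  | whil p l args b ih => exact ⟨_, whil_path_nil p l args b⟩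

/-- `LetIn S z`: the letter `z` belongs to the alphabet of `S`. -/
def LetIn : Schema → Letter → Prop
  | .skip, _ => False
  | .assign y f l args, z => z = Letter.asn y f l args
  | .seq a b, z => LetIn a z ∨ LetIn b z
  | .ite p l args t e, z => (∃ X, z = Letter.prd p l args X) ∨ LetIn t z ∨ LetIn e z
  | .whil p l args b, z => (∃ X, z = Letter.prd p l args X) ∨ LetIn b z

theorem letIn_of_path {S : Schema} {σ : List Letter} (h : σ ∈ Paths S) {z : Letter}
    (hz : z ∈ σ) : LetIn S z := by
  induction S generalizing σ with
  | skip => rw [show σ = [] from h] at hz; simp at hz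
  | assign y f l args => rw [show σ = _ from h] at hz; simpa [LetIn] using hz
  | seq a b iha ihb =>
    obtain ⟨x, hx, y, hy, rfl⟩ := h
    rcases List.mem_append.1 hz with hz | hz
    · exact Or.inl (iha hx hz)
    · exact Or.inr (ihb hy hz)
  | ite p l args t e iht ihe =>
    rcases h with ⟨x, hx, rfl⟩ | ⟨x, hx, rfl⟩
    · rcases List.mem_cons.1 hz with hz | hz
      · exact Or.inl ⟨_, hz⟩
      · exact Or.inr (Or.inl (iht hx hz))
    · rcases List.mem_cons.1 hz with hz | hz
      · exact Or.inl ⟨_, hz⟩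
      · exact Or.inr (Or.inr (ihe hx hz))
  | whil p l args b ih =>
    revert hz
    refine whil_induction (P := fun σ => z ∈ σ → LetIn (.whil p l args b) z) ?_ ?_ σ h
    · intro hz; exact Or.inl ⟨false, by simpa using hz⟩
    · intro x hx y hy ihy hz
      rcases List.mem_cons.1 hz with hz | hz
      · exact Or.inl ⟨_, hz⟩
      · rcases List.mem_append.1 hz with hz | hz
        · exact Or.inr (ih hx hz)
        · exact ihy hz

theorem LetIn.lsym {S : Schema} {z : Letter} (h : LetIn S z) : lsymOf z ∈ lsymSet S := by
  induction S with
  | skip => exact h.elim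
  | assign y f l args => rw [show z = _ from h]; rfl
  | seq a b iha ihb => exact h.imp iha ihb
  | ite p l args t e iht ihe =>
    rcases h with ⟨X, rfl⟩ | h
    · exact Or.inl rfl
    · exact Or.inr (h.imp iht ihe)
  | whil p l args b ih =>
    rcases h with ⟨X, rfl⟩ | h
    · exact Or.inl rfl
    · exact Or.inr (ih h)

theorem lsym_of_path {S : Schema} {σ : List Letter} (h : σ ∈ Paths S) {z : Letter}
    (hz : z ∈ σ) : lsymOf z ∈ lsymSet S := (letIn_of_path h hz).lsym

theorem LetIn.assignsWith {S : Schema} {y f l : ℕ} {args : List ℕ}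
    (h : LetIn S (.asn y f l args)) : AssignsWith S f y := by
  induction S with
  | skip => exact h.elim
  | assign y' f' l' args' => cases h; exact ⟨rfl, rfl⟩
  | seq a b iha ihb => exact h.imp iha ihb
  | ite p l args t e iht ihe =>
    rcases h with ⟨X, h⟩ | h
    · cases h
    · exact h.imp iht ihe
  | whil p l args b ih =>
    rcases h with ⟨X, h⟩ | h
    · cases h
    · exact ih h

theorem AssignsWith.assignsTo {S : Schema} {f y : ℕ} (h : AssignsWith S f y) : AssignsTo S y := by
  induction S with
  | skip => exact h.elim
  | assign y' f' l' args' => exact h.2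
  | seq a b iha ihb => exact h.imp iha ihb
  | ite p l args t e iht ihe => exact h.imp iht ihe
  | whil p l args b ih => exact ih h

theorem AssignsTo.exists_path {S : Schema} {v : ℕ} (h : AssignsTo S v) :
    ∃ σ ∈ Paths S, ¬ NoAsn σ v := by
  have mono : ∀ {σ τ : List Letter}, σ ⊆ τ → ¬ NoAsn σ v → ¬ NoAsn τ v :=
    fun hs h hn => h fun f l args hm => hn f l args (hs hm)
  induction S with
  | skip => exact h.elim
  | assign y f l args =>
    refine ⟨_, rfl, fun hn => hn f l args ?_⟩
    rw [show y = v from h]; simp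
  | seq a b iha ihb =>
    obtain ⟨x, hx⟩ := paths_nonempty a
    obtain ⟨y, hy⟩ := paths_nonempty b
    rcases h with h | h
    · obtain ⟨x, hx, h⟩ := iha h
      exact ⟨_, ⟨x, hx, y, hy, rfl⟩, mono (by simp) h⟩
    · obtain ⟨y, hy, h⟩ := ihb h
      exact ⟨_, ⟨x, hx, y, hy, rfl⟩, mono (by simp) h⟩
  | ite p l args t e iht ihe =>
    rcases h with h | h
    · obtain ⟨x, hx, h⟩ := iht h
      exact ⟨_, Or.inl ⟨x, hx, rfl⟩, mono (by simp) h⟩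
    · obtain ⟨x, hx, h⟩ := ihe h
      exact ⟨_, Or.inr ⟨x, hx, rfl⟩, mono (by simp) h⟩
  | whil p l args b ih =>
    obtain ⟨x, hx, h⟩ := ih h
    refine ⟨_, whil_path_cons hx (whil_path_nil p l args b), mono ?_ h⟩
    intro z hz; simp [hz]

theorem noAsn_of_not_assignsTo {S : Schema} {v : ℕ} (h : ¬ AssignsTo S v) {σ : List Letter}
    (hσ : σ ∈ Paths S) : NoAsn σ v :=
  fun _ _ _ hm => h (letIn_of_path hσ hm).assignsWith.assignsTo

/-- A labelled symbol determines its letter, up to the truth value of a predicate letter. -/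
theorem letter_unique {S : Schema} (hW : WellLabelled S) {z z' : Letter} (h : LetIn S z)
    (h' : LetIn S z') (he : lsymOf z = lsymOf z') :
    (∃ y f l args, z = .asn y f l args ∧ z' = .asn y f l args) ∨
    (∃ p l args X X', z = .prd p l args X ∧ z' = .prd p l args X') := by
  induction S with
  | skip => exact h.elim
  | assign y f l args => exact Or.inl ⟨y, f, l, args, h, h'⟩
  | seq a b iha ihb =>
    have ha : WellLabelled a := hW.of_occurs (.seqL (.refl a))
    have hb : WellLabelled b := hW.of_occurs (.seqR (.refl b))
    rcases h with h | h <;> rcases h' with h' | h'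
    · exact iha ha h h'
    · exact (hW.seq_disj h.lsym (he ▸ h'.lsym)).elim
    · exact (hW.seq_disj h'.lsym (he ▸ h.lsym)).elim
    · exact ihb hb h h'
  | ite p l args t e iht ihe =>
    have ha : WellLabelled t := hW.of_occurs (.iteT (.refl t))
    have hb : WellLabelled e := hW.of_occurs (.iteF (.refl e))
    have hh := hW.ite_head
    rcases h with ⟨X, rfl⟩ | h | h <;> rcases h' with ⟨X', rfl⟩ | h' | h'
    · exact Or.inr ⟨p, l, args, X, X', rfl, rfl⟩
    · exact (hh.1 (by have := h'.lsym; rwa [← he] at this)).elim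
    · exact (hh.2 (by have := h'.lsym; rwa [← he] at this)).elim
    · exact (hh.1 (by have := h.lsym; rwa [he] at this)).elim
    · exact iht ha h h'
    · exact (hW.ite_disj h.lsym (he ▸ h'.lsym)).elim
    · exact (hh.2 (by have := h.lsym; rwa [he] at this)).elim
    · exact (hW.ite_disj h'.lsym (he ▸ h.lsym)).elim
    · exact ihe hb h h'
  | whil p l args b ih =>
    have hb : WellLabelled b := hW.of_occurs (.whilB (.refl b))
    have hh := hW.whil_head
    rcases h with ⟨X, rfl⟩ | h <;> rcases h' with ⟨X', rfl⟩ | hz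
    · exact Or.inr ⟨p, l, args, X, X', rfl, rfl⟩
    · exact (hh (by have := hz.lsym; rwa [← he] at this)).elim
    · exact (hh (by have := h.lsym; rwa [he] at this)).elim
    · exact ih hb h hz

/-- A letter on a path through a loop is either a test of the loop, or it lies in one of the
iterations; in both cases what follows it may be exchanged. -/
theorem whil_decomp {p l : ℕ} {args : List ℕ} {B : Schema} {a b : List Letter} {x : Letter}
    (h : a ++ x :: b ∈ Paths (.whil p l args B)) :
    ((∃ X, x = .prd p l args X) ∧ x :: b ∈ Paths (.whil p l args B) ∧
      ∀ c ∈ Paths (.whil p l args B), a ++ c ∈ Paths (.whil p l args B)) ∨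
    (∃ a₀ x₁ x₂ b₀, a = a₀ ++ x₁ ∧ b = x₂ ++ b₀ ∧ x₁ ++ x :: x₂ ∈ Paths B ∧
      b₀ ∈ Paths (.whil p l args B) ∧
      ∀ y ∈ Paths B, ∀ c ∈ Paths (.whil p l args B), a₀ ++ y ++ c ∈ Paths (.whil p l args B)) := by
  obtain ⟨n, hn⟩ := h
  induction n generalizing a with
  | zero =>
    have hσ : a ++ x :: b = [.prd p l args false] := hn
    cases a with
    | nil =>
      simp only [List.nil_append, List.cons.injEq] at hσ
      obtain ⟨rfl, rfl⟩ := hσ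
      exact Or.inl ⟨⟨_, rfl⟩, whil_path_nil p l args B, fun c hc => by simpa using hc⟩
    | cons z a => simp at hσ
  | succ n ih =>
    obtain ⟨s, hs, y, hy, hσ⟩ := hn
    have hy' : y ∈ Paths (.whil p l args B) := ⟨n, hy⟩
    cases a with
    | nil =>
      simp only [List.nil_append, List.cons.injEq] at hσ
      obtain ⟨rfl, rfl⟩ := hσ
      exact Or.inl ⟨⟨_, rfl⟩, whil_path_cons hs hy', fun c hc => by simpa using hc⟩
    | cons z a =>
      simp only [List.cons_append, List.cons.injEq] at hσ
      obtain ⟨rfl, hσ⟩ := hσ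
      rcases split_append hσ with ⟨c, rfl, rfl⟩ | ⟨c, rfl, rfl⟩
      · right
        refine ⟨[.prd p l args true], a, c, y, rfl, rfl, hs, hy', fun y' hy' c' hc' => ?_⟩
        simpa using whil_path_cons hy' hc'
      · rcases ih hy with ⟨h1, h2, h3⟩ | ⟨a₀, x₁, x₂, b₀, rfl, rfl, h1, h2, h3⟩
        · refine Or.inl ⟨h1, h2, fun c' hc' => ?_⟩
          simpa using whil_path_cons hs (h3 c' hc')
        · refine Or.inr ⟨.prd p l args true :: (s ++ a₀), x₁, x₂, b₀, by simp, rfl, h1, h2,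
            fun y' hy' c' hc' => ?_⟩
          simpa using whil_path_cons hs (h3 y' hy' c' hc')

/-- Two paths through the same labelled symbol may be spliced there. -/
theorem splice {S : Schema} (hW : WellLabelled S) {a b a' b' : List Letter} {x x' : Letter}
    (h : a ++ x :: b ∈ Paths S) (h' : a' ++ x' :: b' ∈ Paths S) (he : lsymOf x = lsymOf x') :
    a ++ x' :: b' ∈ Paths S := by
  induction S generalizing a b a' b' with
  | skip => simp [Paths] at h
  | assign y f l args =>
    have h1 : a = [] := by cases a <;> simp_all [Paths]
    have h2 : a' = [] := by cases a' <;> simp_all [Paths]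
    subst h1 h2; exact h'
  | seq A B iha ihb =>
    have ha : WellLabelled A := hW.of_occurs (.seqL (.refl A))
    have hb : WellLabelled B := hW.of_occurs (.seqR (.refl B))
    obtain ⟨s, hs, t, ht, hst⟩ := h
    obtain ⟨s', hs', t', ht', hst'⟩ := h'
    rcases split_append hst with ⟨c, rfl, rfl⟩ | ⟨c, rfl, rfl⟩ <;>
    rcases split_append hst' with ⟨c', rfl, rfl⟩ | ⟨c', rfl, rfl⟩
    · exact ⟨_, iha ha hs hs', t', ht', by simp⟩
    · exact (hW.seq_disj (lsym_of_path hs (z := x) (by simp))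
        (he ▸ lsym_of_path ht' (z := x') (by simp))).elim
    · exact (hW.seq_disj (lsym_of_path hs' (z := x') (by simp))
        (he ▸ lsym_of_path ht (z := x) (by simp))).elim
    · exact ⟨_, hs, _, ihb hb ht ht', by simp⟩
  | ite p l args A B iha ihb =>
    have ha : WellLabelled A := hW.of_occurs (.iteT (.refl A))
    have hb : WellLabelled B := hW.of_occurs (.iteF (.refl B))
    have hh := hW.ite_head
    cases a with
    | nil =>
      have hx : ∃ X, x = .prd p l args X := by
        rcases h with ⟨s, hs, h⟩ | ⟨s, hs, h⟩ <;> simp at h <;> exact ⟨_, h.1⟩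
      obtain ⟨X, rfl⟩ := hx
      cases a' with
      | nil => exact h'
      | cons z a' =>
        rcases h' with ⟨s, hs, h'⟩ | ⟨s, hs, h'⟩ <;>
        simp only [List.cons_append, List.cons.injEq] at h' <;> obtain ⟨rfl, rfl⟩ := h'
        · exact (hh.1 (by have := lsym_of_path hs (z := x') (by simp); rwa [← he] at this)).elim
        · exact (hh.2 (by have := lsym_of_path hs (z := x') (by simp); rwa [← he] at this)).elim
    | cons z a =>
      rcases h with ⟨s, hs, h⟩ | ⟨s, hs, h⟩ <;>
      simp only [List.cons_append, List.cons.injEq] at h <;> obtain ⟨rfl, rfl⟩ := h <;>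
      have hx := lsym_of_path hs (z := x) (by simp) <;>
      rw [he] at hx <;>
      rcases h' with ⟨s', hs', h'⟩ | ⟨s', hs', h'⟩ <;>
      cases a' with
      | nil =>
        simp only [List.nil_append, List.cons.injEq] at h'
        obtain ⟨rfl, rfl⟩ := h'
        first | exact (hh.1 hx).elim | exact (hh.2 hx).elim
      | cons z' a' =>
        simp only [List.cons_append, List.cons.injEq] at h'
        obtain ⟨rfl, rfl⟩ := h'
        first
        | exact Or.inl ⟨_, iha ha hs hs', rfl⟩
        | exact Or.inr ⟨_, ihb hb hs hs', rfl⟩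
        | exact (hW.ite_disj hx (lsym_of_path hs' (z := x') (by simp))).elim
        | exact (hW.ite_disj (lsym_of_path hs' (z := x') (by simp)) hx).elim
  | whil p l args B ih =>
    have hb : WellLabelled B := hW.of_occurs (.whilB (.refl B))
    have hh := hW.whil_head
    rcases whil_decomp h with ⟨⟨X, rfl⟩, h1, h2⟩ | ⟨a₀, x₁, x₂, b₀, rfl, rfl, h1, h2, h3⟩ <;>
    rcases whil_decomp h' with ⟨⟨X', rfl⟩, h1', h2'⟩ |
      ⟨a₀', x₁', x₂', b₀', rfl, rfl, h1', hb₀, h3'⟩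
    · exact h2 _ h1'
    · exact (hh (by have := lsym_of_path h1' (z := x') (by simp); rwa [← he] at this)).elim
    · exact (hh (by have := lsym_of_path h1 (z := x) (by simp); rwa [he] at this)).elim
    · simpa using h3 _ (ih hb h1 h1') _ hb₀

/-- Two distinct complete paths first differ in the truth value of a predicate letter. -/
theorem diverge {S : Schema} {σ τ : List Letter} (h : σ ∈ Paths S) (h' : τ ∈ Paths S) :
    σ = τ ∨ ∃ a p l args X b c, σ = a ++ .prd p l args X :: b ∧
      τ = a ++ .prd p l args (!X) :: c := by
  induction S generalizing σ τ with
  | skip => left; rw [show σ = _ from h, show τ = _ from h']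
  | assign y f l args => left; rw [show σ = _ from h, show τ = _ from h']
  | seq A B iha ihb =>
    obtain ⟨s, hs, t, ht, rfl⟩ := h
    obtain ⟨s', hs', t', ht', rfl⟩ := h'
    rcases iha hs hs' with rfl | ⟨a, p, l, args, X, b, c, rfl, rfl⟩
    · rcases ihb ht ht' with rfl | ⟨a, p, l, args, X, b, c, rfl, rfl⟩
      · exact Or.inl rfl
      · exact Or.inr ⟨s ++ a, p, l, args, X, b, c, by simp, by simp⟩
    · exact Or.inr ⟨a, p, l, args, X, b ++ t, c ++ t', by simp, by simp⟩
  | ite p l args A B iha ihb =>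
    rcases h with ⟨s, hs, rfl⟩ | ⟨s, hs, rfl⟩ <;> rcases h' with ⟨s', hs', rfl⟩ | ⟨s', hs', rfl⟩
    · rcases iha hs hs' with rfl | ⟨a, p', l', args', X, b, c, rfl, rfl⟩
      · exact Or.inl rfl
      · exact Or.inr ⟨_ :: a, p', l', args', X, b, c, rfl, rfl⟩
    · exact Or.inr ⟨[], p, l, args, true, s, s', rfl, rfl⟩
    · exact Or.inr ⟨[], p, l, args, false, s, s', rfl, rfl⟩
    · rcases ihb hs hs' with rfl | ⟨a, p', l', args', X, b, c, rfl, rfl⟩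
      · exact Or.inl rfl
      · exact Or.inr ⟨_ :: a, p', l', args', X, b, c, rfl, rfl⟩
  | whil p l args B ih =>
    obtain ⟨n, hn⟩ := h
    obtain ⟨k, hk⟩ := h'
    induction n generalizing σ τ k with
    | zero =>
      cases k with
      | zero => left; rw [show σ = _ from hn, show τ = _ from hk]
      | succ k =>
        obtain ⟨x, hx, y, hy, rfl⟩ := hk
        exact Or.inr ⟨[], p, l, args, false, [], x ++ y, hn, rfl⟩
    | succ n ihn =>
      obtain ⟨x, hx, y, hy, rfl⟩ := hn
      cases k with
      | zero => exact Or.inr ⟨[], p, l, args, true, x ++ y, [], rfl, hk⟩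
      | succ k =>
        obtain ⟨x', hx', y', hy', rfl⟩ := hk
        rcases ih hx hx' with rfl | ⟨a, p', l', args', X, b, c, rfl, rfl⟩
        · rcases ihn hy k hy' with rfl | ⟨a, p', l', args', X, b, c, rfl, rfl⟩
          · exact Or.inl rfl
          · exact Or.inr ⟨.prd p l args true :: (x ++ a), p', l', args', X, b, c, by simp,
              by simp⟩
        · exact Or.inr ⟨.prd p l args true :: a, p', l', args', X, b ++ y, c ++ y', by simp,
            by simp⟩

/-- Between two visits of the same labelled symbol, some enclosing loop is re-entered. -/
theorem loop_between {S : Schema} (hW : WellLabelled S) {a m b : List Letter} {x y : Letter}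
    (h : a ++ x :: (m ++ y :: b) ∈ Paths S) (he : lsymOf x = lsymOf y) :
    ∃ w l args B, Letter.prd w l args true ∈ x :: m ∧ Occurs (.whil w l args B) S ∧
      (lsymOf x = .pr w l ∨ lsymOf x ∈ lsymSet B) := by
  induction S generalizing a m b with
  | skip => simp [Paths] at h
  | assign y f l args => cases a <;> simp [Paths] at h
  | seq A B iha ihb =>
    have ha : WellLabelled A := hW.of_occurs (.seqL (.refl A))
    have hb : WellLabelled B := hW.of_occurs (.seqR (.refl B))
    obtain ⟨s, hs, t, ht, hst⟩ := h
    rcases split_append hst with ⟨c, rfl, hc⟩ | ⟨c, rfl, rfl⟩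
    · rcases split_append hc with ⟨d, rfl, rfl⟩ | ⟨d, rfl, rfl⟩
      · obtain ⟨w, l, args, D, h1, h2, h3⟩ := iha ha hs
        exact ⟨w, l, args, D, h1, .seqL h2, h3⟩
      · exact (hW.seq_disj (lsym_of_path hs (z := x) (by simp))
          (he ▸ lsym_of_path ht (z := y) (by simp))).elim
    · obtain ⟨w, l, args, D, h1, h2, h3⟩ := ihb hb ht
      exact ⟨w, l, args, D, h1, .seqR h2, h3⟩
  | ite p l args A B iha ihb =>
    have ha : WellLabelled A := hW.of_occurs (.iteT (.refl A))
    have hb : WellLabelled B := hW.of_occurs (.iteF (.refl B))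
    have hh := hW.ite_head
    rcases h with ⟨s, hs, h⟩ | ⟨s, hs, h⟩ <;> cases a with
    | nil =>
      simp only [List.nil_append, List.cons.injEq] at h
      obtain ⟨rfl, rfl⟩ := h
      have hy := lsym_of_path hs (z := y) (by simp)
      rw [← he] at hy
      first | exact (hh.1 hy).elim | exact (hh.2 hy).elim
    | cons z a =>
      simp only [List.cons_append, List.cons.injEq] at h
      obtain ⟨rfl, rfl⟩ := h
      first
      | (obtain ⟨w, l, args, D, h1, h2, h3⟩ := iha ha hs
         exact ⟨w, l, args, D, h1, .iteT h2, h3⟩)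
      | (obtain ⟨w, l, args, D, h1, h2, h3⟩ := ihb hb hs
         exact ⟨w, l, args, D, h1, .iteF h2, h3⟩)
  | whil p l args B ih =>
    have hb : WellLabelled B := hW.of_occurs (.whilB (.refl B))
    have hh := hW.whil_head
    rcases whil_decomp h with ⟨⟨X, rfl⟩, ⟨n, h1⟩, h2⟩ | ⟨a₀, x₁, x₂, b₀, rfl, hm, h1, ⟨n, h2⟩, h3⟩
    · cases n with
      | zero => simp [whileIter] at h1
      | succ n =>
        obtain ⟨s, hs, t, ht, hst⟩ := h1
        simp only [List.cons.injEq, Letter.prd.injEq, true_and] at hst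
        obtain ⟨rfl, hst⟩ := hst
        exact ⟨p, l, args, B, by simp, .refl _, Or.inl rfl⟩
    · have hx := lsym_of_path h1 (z := x) (by simp)
      rcases split_append hm with ⟨c, rfl, rfl⟩ | ⟨c, rfl, hc⟩
      · obtain ⟨w, l, args, D, h1, h2, h3⟩ := ih hb h1
        exact ⟨w, l, args, D, h1, .whilB h2, h3⟩
      · have own : ∀ X, x₂ ++ b₀ = x₂ ++ c ++ y :: b → b₀ ≠ [] →
            b₀.head? = some (.prd p l args X) → c ≠ [] := by
          rintro X - - hX rfl
          rw [hc] at hX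
          simp at hX
          subst hX
          exact hh (by rwa [he] at hx)
        cases n with
        | zero =>
          rw [show b₀ = _ from h2] at hc own
          cases c with
          | nil => exact (own false (by simp [hc]) (by simp) rfl rfl).elim
          | cons z c => simp at hc
        | succ n =>
          obtain ⟨s, hs, t, ht, rfl⟩ := h2
          cases c with
          | nil => exact (own true (by simp [hc]) (by simp) rfl rfl).elim
          | cons z c =>
            simp only [List.cons_append, List.cons.injEq] at hc
            obtain ⟨rfl, hc⟩ := hc
            exact ⟨p, l, args, B, by simp, .refl _, Or.inr hx⟩

/-- A path visiting a symbol of an occurring subschema `N` runs through `N` there, and that run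
may be replaced by any other path through `N`. -/
theorem node_decomp {N S : Schema} (hN : Occurs N S) (hW : WellLabelled S) {a b : List Letter}
    {z : Letter} (h : a ++ z :: b ∈ Paths S) (hz : lsymOf z ∈ lsymSet N) :
    ∃ a₀ x₁ x₂ b₀, a = a₀ ++ x₁ ∧ b = x₂ ++ b₀ ∧ x₁ ++ z :: x₂ ∈ Paths N ∧
      ∀ x ∈ Paths N, a₀ ++ x ++ b₀ ∈ Paths S := by
  induction hN generalizing a b with
  | refl => exact ⟨[], a, b, [], rfl, by simp, h, fun x hx => by simpa using hx⟩
  | seqL hO ih =>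
    obtain ⟨s, hs, t, ht, hst⟩ := h
    rcases split_append hst with ⟨c, rfl, rfl⟩ | ⟨c, rfl, rfl⟩
    · obtain ⟨a₀, x₁, x₂, b₀, rfl, rfl, h1, h2⟩ := ih (hW.of_occurs (.seqL (.refl _))) hs
      exact ⟨a₀, x₁, x₂, b₀ ++ t, rfl, by simp, h1, fun x hx => ⟨_, h2 x hx, t, ht, by simp⟩⟩
    · exact (hW.seq_disj (hO.lsymSet_subset hz) (lsym_of_path ht (by simp))).elim
  | seqR hO ih =>
    obtain ⟨s, hs, t, ht, hst⟩ := h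
    rcases split_append hst with ⟨c, rfl, rfl⟩ | ⟨c, rfl, rfl⟩
    · exact (hW.seq_disj (lsym_of_path hs (by simp)) (hO.lsymSet_subset hz)).elim
    · obtain ⟨a₀, x₁, x₂, b₀, rfl, rfl, h1, h2⟩ := ih (hW.of_occurs (.seqR (.refl _))) ht
      exact ⟨s ++ a₀, x₁, x₂, b₀, by simp, rfl, h1, fun x hx => ⟨s, hs, _, h2 x hx, by simp⟩⟩
  | iteT hO ih =>
    have hz' := hO.lsymSet_subset hz
    rcases h with ⟨s, hs, h⟩ | ⟨s, hs, h⟩ <;> cases a with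
    | nil =>
      simp only [List.nil_append, List.cons.injEq] at h
      obtain ⟨rfl, rfl⟩ := h
      exact (hW.ite_head.1 hz').elim
    | cons z' a =>
      simp only [List.cons_append, List.cons.injEq] at h
      obtain ⟨rfl, rfl⟩ := h
      first
      | exact (hW.ite_disj hz' (lsym_of_path hs (by simp))).elim
      | (obtain ⟨a₀, x₁, x₂, b₀, rfl, rfl, h1, h2⟩ := ih (hW.of_occurs (.iteT (.refl _))) hs
         exact ⟨_ :: a₀, x₁, x₂, b₀, rfl, rfl, h1, fun x hx => Or.inl ⟨_, h2 x hx, rfl⟩⟩)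
  | iteF hO ih =>
    have hz' := hO.lsymSet_subset hz
    rcases h with ⟨s, hs, h⟩ | ⟨s, hs, h⟩ <;> cases a with
    | nil =>
      simp only [List.nil_append, List.cons.injEq] at h
      obtain ⟨rfl, rfl⟩ := h
      exact (hW.ite_head.2 hz').elim
    | cons z' a =>
      simp only [List.cons_append, List.cons.injEq] at h
      obtain ⟨rfl, rfl⟩ := h
      first
      | exact (hW.ite_disj (lsym_of_path hs (by simp)) hz').elim
      | (obtain ⟨a₀, x₁, x₂, b₀, rfl, rfl, h1, h2⟩ := ih (hW.of_occurs (.iteF (.refl _))) hs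
         exact ⟨_ :: a₀, x₁, x₂, b₀, rfl, rfl, h1, fun x hx => Or.inr ⟨_, h2 x hx, rfl⟩⟩)
  | whilB hO ih =>
    have hz' := hO.lsymSet_subset hz
    rcases whil_decomp h with ⟨⟨X, rfl⟩, h1, h2⟩ | ⟨a₀, x₁, x₂, b₀, rfl, rfl, h1, h2, h3⟩
    · exact (hW.whil_head hz').elim
    · obtain ⟨a₁, y₁, y₂, b₁, rfl, rfl, h4, h5⟩ := ih (hW.of_occurs (.whilB (.refl _))) h1
      refine ⟨a₀ ++ a₁, y₁, y₂, b₁ ++ b₀, by simp, by simp, h4, fun x hx => ?_⟩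
      simpa using h3 _ (h5 x hx) _ h2

/-- A loop whose test symbol lies in an occurring subschema lies entirely in that subschema. -/
theorem whil_occurs_of_mem {N S : Schema} (hN : Occurs N S) (hW : WellLabelled S) {w l : ℕ}
    {args : List ℕ} {B : Schema} (hO : Occurs (.whil w l args B) S)
    (hm : LSym.pr w l ∈ lsymSet N) : Occurs (.whil w l args B) N := by
  have hd : LSym.pr w l ∈ lsymSet (.whil w l args B) := Or.inl rfl
  induction hN with
  | refl => exact hO
  | seqL h ih =>
    cases hO with
    | seqL hO => exact ih (hW.of_occurs (.seqL (.refl _))) hO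
    | seqR hO => exact (hW.seq_disj (h.lsymSet_subset hm) (hO.lsymSet_subset hd)).elim
  | seqR h ih =>
    cases hO with
    | seqR hO => exact ih (hW.of_occurs (.seqR (.refl _))) hO
    | seqL hO => exact (hW.seq_disj (hO.lsymSet_subset hd) (h.lsymSet_subset hm)).elim
  | iteT h ih =>
    cases hO with
    | iteT hO => exact ih (hW.of_occurs (.iteT (.refl _))) hO
    | iteF hO => exact (hW.ite_disj (h.lsymSet_subset hm) (hO.lsymSet_subset hd)).elim
  | iteF h ih =>
    cases hO with
    | iteF hO => exact ih (hW.of_occurs (.iteF (.refl _))) hO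
    | iteT hO => exact (hW.ite_disj (hO.lsymSet_subset hd) (h.lsymSet_subset hm)).elim
  | whilB h ih =>
    cases hO with
    | refl => exact (hW.whil_head (h.lsymSet_subset hm)).elim
    | whilB hO => exact ih (hW.of_occurs (.whilB (.refl _))) hO

/-! ### Predicate terms visited along a path -/

/-- `VisFrom ρ x r c b`: executing `x` after `ρ`, the predicate term `r(c)` is visited with truth
value `b`. -/
def VisFrom (ρ x : List Letter) (r : ℕ) (c : List Trm) (b : Bool) : Prop :=
  ∃ pre l args post, x = pre ++ Letter.prd r l args b :: post ∧ c = args.map (hexec (ρ ++ pre))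

theorem visFrom_nil {ρ : List Letter} {r : ℕ} {c : List Trm} {b : Bool} :
    ¬ VisFrom ρ [] r c b := by
  rintro ⟨pre, l, args, post, h, -⟩
  simp at h

theorem visFrom_append {ρ x y : List Letter} {r : ℕ} {c : List Trm} {b : Bool} :
    VisFrom ρ (x ++ y) r c b ↔ VisFrom ρ x r c b ∨ VisFrom (ρ ++ x) y r c b := by
  constructor
  · rintro ⟨pre, l, args, post, h, hc⟩
    rcases split_append h.symm with ⟨d, rfl, rfl⟩ | ⟨d, rfl, rfl⟩
    · exact Or.inl ⟨pre, l, args, d, rfl, hc⟩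
    · exact Or.inr ⟨d, l, args, post, rfl, by simpa using hc⟩
  · rintro (⟨pre, l, args, post, rfl, hc⟩ | ⟨pre, l, args, post, rfl, hc⟩)
    · exact ⟨pre, l, args, post ++ y, by simp, hc⟩
    · exact ⟨x ++ pre, l, args, post, by simp, by simpa using hc⟩

theorem visFrom_congr {ρ ρ' x : List Letter} (h : hexec ρ = hexec ρ') {r : ℕ} {c : List Trm}
    {b : Bool} (hv : VisFrom ρ x r c b) : VisFrom ρ' x r c b := by
  obtain ⟨pre, l, args, post, rfl, hc⟩ := hv
  refine ⟨pre, l, args, post, rfl, ?_⟩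
  rw [hc]
  refine List.map_congr_left fun v _ => ?_
  rw [hexec_append, hexec_append, h]

theorem visFrom_single {ρ : List Letter} {p l : ℕ} {args : List ℕ} {X : Bool} {r : ℕ}
    {c : List Trm} {b : Bool} :
    VisFrom ρ [Letter.prd p l args X] r c b ↔ r = p ∧ c = args.map (hexec ρ) ∧ b = X := by
  constructor
  · rintro ⟨pre, m, args', post, h, hc⟩
    cases pre with
    | nil =>
      simp only [List.nil_append, List.cons.injEq, Letter.prd.injEq] at h
      obtain ⟨⟨rfl, rfl, rfl, rfl⟩, -⟩ := h
      exact ⟨rfl, by simpa using hc, rfl⟩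
    | cons z pre => simp at h
  · rintro ⟨rfl, hc, rfl⟩
    exact ⟨[], l, args, [], rfl, by simpa using hc⟩

theorem visFrom_cons_prd {ρ x : List Letter} {p l : ℕ} {args : List ℕ} {X : Bool} {r : ℕ}
    {c : List Trm} {b : Bool} :
    VisFrom ρ (Letter.prd p l args X :: x) r c b ↔
      (r = p ∧ c = args.map (hexec ρ) ∧ b = X) ∨ VisFrom ρ x r c b := by
  have h := visFrom_append (ρ := ρ) (x := [Letter.prd p l args X]) (y := x) (r := r) (c := c)
    (b := b)
  rw [visFrom_single] at h
  have h2 : VisFrom (ρ ++ [Letter.prd p l args X]) x r c b ↔ VisFrom ρ x r c b :=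
    ⟨visFrom_congr (hexec_snoc_prd _ _ _ _ _), visFrom_congr (hexec_snoc_prd _ _ _ _ _).symm⟩
  rw [h2] at h
  exact h

theorem visFrom_finite (ρ x : List Letter) :
    {rc : ℕ × List Trm | ∃ b, VisFrom ρ x rc.1 rc.2 b}.Finite := by
  induction x using List.reverseRecOn with
  | nil => simp [visFrom_nil]
  | append_singleton x a ih =>
    cases a with
    | asn y f l args =>
      refine ih.subset ?_
      rintro ⟨r, c⟩ ⟨b, hb⟩
      rcases visFrom_append.1 hb with hb | ⟨pre, m, args', post, h, -⟩
      · exact ⟨b, hb⟩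
      · cases pre <;> simp at h
    | prd p l args X =>
      refine (ih.union (Set.finite_singleton (p, args.map (hexec (ρ ++ x))))).subset ?_
      rintro ⟨r, c⟩ ⟨b, hb⟩
      rcases visFrom_append.1 hb with hb | hb
      · exact Or.inl ⟨b, hb⟩
      · obtain ⟨rfl, rfl, rfl⟩ := visFrom_single.1 hb
        exact Or.inr rfl

theorem visFrom_subst {x : List Letter} {r : ℕ} {c : List Trm} {b : Bool}
    (h : VisFrom [] x r c b) (ρ : List Letter) :
    VisFrom ρ x r (c.map (Trm.subst (hexec ρ))) b := by
  obtain ⟨pre, l, args, post, rfl, rfl⟩ := h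
  refine ⟨pre, l, args, post, rfl, ?_⟩
  simp [hexec_append]

theorem visFrom_unsubst {x : List Letter} {r : ℕ} {c : List Trm} {b : Bool} {ρ : List Letter}
    (h : VisFrom ρ x r c b) :
    ∃ c₀, VisFrom [] x r c₀ b ∧ c = c₀.map (Trm.subst (hexec ρ)) := by
  obtain ⟨pre, l, args, post, rfl, rfl⟩ := h
  exact ⟨_, ⟨pre, l, args, post, rfl, rfl⟩, by simp [hexec_append]⟩

/-- Predicate terms visited by two continuations of `ρ` coincide only if they coincide already
when the continuations are executed from the natural state. -/
theorem vis_cancel {S : Schema} (hF : Free S) (hL : Liberal S) {ρ x y : List Letter}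
    (hx : ρ ++ x ∈ PrePaths S) (hy : ρ ++ y ∈ PrePaths S) {r r' : ℕ} {c c' : List Trm}
    {b b' : Bool}
    (h : VisFrom [] x r c b) (h' : VisFrom [] y r' c' b')
    (he : c.map (Trm.subst (hexec ρ)) = c'.map (Trm.subst (hexec ρ))) : c = c' := by
  obtain ⟨pre, l, args, post, rfl, rfl⟩ := h
  obtain ⟨pre', l', args', post', rfl, rfl⟩ := h'
  have h1 : ρ ++ pre ∈ PrePaths S := by
    rw [← List.append_assoc] at hx; exact PrePaths.of_append hx
  have h2 : ρ ++ pre' ∈ PrePaths S := by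
    rw [← List.append_assoc] at hy; exact PrePaths.of_append hy
  simp only [List.nil_append, List.map_map] at he ⊢
  have e1 : ∀ z : List Letter, (Trm.subst (hexec ρ) ∘ hexec z) = hexec (ρ ++ z) := by
    intro z; funext v; simp [hexec_append]
  rw [e1, e1] at he
  exact map_eq_map_of_forall (fun v w h => cancel hF hL _ le_rfl h1 h2 v w h) he

theorem hAgrees_iff {i : HInterp} {σ : List Letter} :
    hAgrees i σ ↔ ∀ r c b, VisFrom [] σ r c b → i r c = b := by
  constructor
  · rintro h r c b ⟨pre, l, args, post, rfl, rfl⟩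
    have := h pre r l args b ⟨post, by simp⟩
    rw [execP_herb] at this
    exact this
  · rintro h τ p l args b ⟨post, rfl⟩
    rw [execP_herb]
    exact h p _ b ⟨τ, l, args, post, by simp, by simp⟩

theorem exists_path_of_letIn {S : Schema} {z : Letter} (h : LetIn S z) :
    ∃ a b, a ++ z :: b ∈ Paths S := by
  induction S with
  | skip => exact h.elim
  | assign y f l args => exact ⟨[], [], by rw [show z = _ from h]; rfl⟩
  | seq A B iha ihb =>
    obtain ⟨x, hx⟩ := paths_nonempty A
    obtain ⟨y, hy⟩ := paths_nonempty B
    rcases h with h | h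
    · obtain ⟨a, b, h⟩ := iha h
      exact ⟨a, b ++ y, _, h, y, hy, by simp⟩
    · obtain ⟨a, b, h⟩ := ihb h
      exact ⟨x ++ a, b, x, hx, _, h, by simp⟩
  | ite p l args A B iha ihb =>
    obtain ⟨x, hx⟩ := paths_nonempty A
    obtain ⟨y, hy⟩ := paths_nonempty B
    rcases h with ⟨X, rfl⟩ | h | h
    · cases X
      · exact ⟨[], y, Or.inr ⟨y, hy, rfl⟩⟩
      · exact ⟨[], x, Or.inl ⟨x, hx, rfl⟩⟩
    · obtain ⟨a, b, h⟩ := iha h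
      exact ⟨.prd p l args true :: a, b, Or.inl ⟨_, h, by simp⟩⟩
    · obtain ⟨a, b, h⟩ := ihb h
      exact ⟨.prd p l args false :: a, b, Or.inr ⟨_, h, by simp⟩⟩
  | whil p l args B ih =>
    obtain ⟨x, hx⟩ := paths_nonempty B
    have h0 := whil_path_nil p l args B
    rcases h with ⟨X, rfl⟩ | h
    · cases X
      · exact ⟨[], [], h0⟩
      · exact ⟨[], _, whil_path_cons hx h0⟩
    · obtain ⟨a, b, h⟩ := ih h
      refine ⟨.prd p l args true :: a, b ++ [.prd p l args false], ?_⟩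
      simpa using whil_path_cons h h0

theorem LetIn.flip {S : Schema} {p l : ℕ} {args : List ℕ} {X : Bool}
    (h : LetIn S (.prd p l args X)) (Y : Bool) : LetIn S (.prd p l args Y) := by
  induction S with
  | skip => exact h.elim
  | assign y f l args => cases h
  | seq A B iha ihb => exact h.imp iha ihb
  | ite q m args' A B iha ihb =>
    rcases h with ⟨X, h⟩ | h
    · cases h; exact Or.inl ⟨Y, rfl⟩
    · exact Or.inr (h.imp iha ihb)
  | whil q m args' B ih =>
    rcases h with ⟨X, h⟩ | h
    · cases h; exact Or.inl ⟨Y, rfl⟩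
    · exact Or.inr (ih h)

theorem exists_flip {S : Schema} (hW : WellLabelled S) {a b : List Letter} {p l : ℕ}
    {args : List ℕ} {X : Bool} (h : a ++ .prd p l args X :: b ∈ Paths S) (Y : Bool) :
    ∃ b', a ++ .prd p l args Y :: b' ∈ Paths S := by
  have hl : LetIn S (.prd p l args X) := letIn_of_path h (by simp)
  obtain ⟨a', b', h'⟩ := exists_path_of_letIn (hl.flip Y)
  exact ⟨b', splice hW h h' rfl⟩

theorem vis_fun {S : Schema} (hF : Free S) {x : List Letter} (hx : x ∈ PrePaths S) {r : ℕ}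
    {c : List Trm} {b b' : Bool} (h : VisFrom [] x r c b) (hv : VisFrom [] x r c b') : b = b' := by
  obtain ⟨i, hi⟩ := hF x hx
  rw [hAgrees_iff] at hi
  rw [← hi _ _ _ h, ← hi _ _ _ hv]

/-- Along a path through a free schema no predicate term is visited twice: otherwise the second
visit could be given the opposite truth value. -/
theorem noRepeat {S : Schema} (hW : WellLabelled S) (hF : Free S) {x y : List Letter}
    (h : x ++ y ∈ PrePaths S) {r : ℕ} {c : List Trm} {b b' : Bool}
    (hx : VisFrom [] x r c b) (hy : VisFrom x y r c b') : False := by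
  obtain ⟨pre, l, args, post, rfl, rfl⟩ := hy
  obtain ⟨τ, ⟨ξ, rfl⟩, h2⟩ := h
  have h3 : (x ++ pre) ++ .prd r l args b' :: (post ++ ξ) ∈ Paths S := by simpa using h2
  obtain ⟨d, hd⟩ := exists_flip hW h3 (!b)
  have : b = !b := by
    refine vis_fun hF (PrePaths.of_path hd) (r := r) (c := args.map (hexec (x ++ pre))) ?_ ?_
    · rw [List.append_assoc]; exact visFrom_append.2 (Or.inl hx)
    · exact ⟨x ++ pre, l, args, d, rfl, by simp⟩
  cases b <;> simp at this

/-! ### Runs -/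

/-- Two runs are equal or part at a predicate term on which the interpretations differ. -/
theorem runs_diverge {S : Schema} {i j : HInterp} {σ τ : List Letter} (h : σ ∈ Paths S)
    (h' : τ ∈ Paths S) (hi : hAgrees i σ) (hj : hAgrees j τ) :
    σ = τ ∨ ∃ a p l args X b c, σ = a ++ .prd p l args X :: b ∧ τ = a ++ .prd p l args (!X) :: c ∧
      i p (args.map (hexec a)) = X ∧ j p (args.map (hexec a)) = !X := by
  rcases diverge h h' with rfl | ⟨a, p, l, args, X, b, c, rfl, rfl⟩
  · exact Or.inl rfl
  · refine Or.inr ⟨a, p, l, args, X, b, c, rfl, rfl, ?_, ?_⟩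
    · exact hAgrees_iff.1 hi _ _ _ ⟨a, l, args, b, rfl, by simp⟩
    · exact hAgrees_iff.1 hj _ _ _ ⟨a, l, args, c, rfl, by simp⟩

theorem run_unique {S : Schema} {i : HInterp} {σ τ : List Letter} (h : σ ∈ Paths S)
    (h' : τ ∈ Paths S) (hi : hAgrees i σ) (hj : hAgrees i τ) : σ = τ := by
  rcases runs_diverge h h' hi hj with h | ⟨a, p, l, args, X, b, c, -, -, h1, h2⟩
  · exact h
  · rw [h1] at h2; cases X <;> simp at h2

theorem run_prefix {S : Schema} {i : HInterp} {P σ : List Letter} (hP : P ∈ PrePaths S)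
    (h : σ ∈ Paths S) (hi : hAgrees i P) (hj : hAgrees i σ) : P <+: σ := by
  obtain ⟨τ, hPτ, hτ⟩ := hP
  rcases diverge h hτ with rfl | ⟨a, p, l, args, X, b, c, rfl, rfl⟩
  · exact hPτ
  · obtain ⟨ξ, hξ⟩ := hPτ
    rcases split_append hξ.symm with ⟨d, rfl, -⟩ | ⟨d, rfl, -⟩
    · have h1 := hAgrees_iff.1 hj _ _ _ ⟨a, l, args, b, rfl, rfl⟩
      have h2 := hAgrees_iff.1 hi _ _ _ ⟨a, l, args, d, rfl, rfl⟩
      rw [h1] at h2; cases X <;> simp at h2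
    · exact ⟨d ++ .prd p l args X :: b, by simp⟩

/-- Every while predicate of `T` is true at finitely many terms only. -/
def FinW (i : HInterp) (T : Schema) : Prop :=
  ∀ w l args B, Occurs (.whil w l args B) T → {c | i w c = true}.Finite

/-- The interpretation `i` is true at finitely many predicate terms only. -/
def FinSupp (i : HInterp) : Prop := {rc : ℕ × List Trm | i rc.1 rc.2 = true}.Finite

theorem FinSupp.finW {i : HInterp} (h : FinSupp i) (T : Schema) : FinW i T := by
  intro w l args B _
  refine (h.image Prod.snd).subset ?_
  intro c hc
  exact ⟨(w, c), hc, rfl⟩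

/-- An interpretation whose while predicates hold finitely often terminates on every subschema of
a free schema: a loop cannot test the same predicate term twice. -/
theorem exists_run {S : Schema} (hW : WellLabelled S) (hF : Free S) {i : HInterp} {T : Schema} :
    ∀ {a : List Letter}, (∀ x ∈ Paths T, a ++ x ∈ PrePaths S) → FinW i T →
      ∃ x ∈ Paths T, ∀ r c b, VisFrom a x r c b → i r c = b := by
  induction T with
  | skip => exact fun _ _ => ⟨[], rfl, fun r c b h => (visFrom_nil h).elim⟩
  | assign y f l args =>
    refine fun _ _ => ⟨_, rfl, fun r c b h => ?_⟩
    obtain ⟨pre, m, args', post, h, -⟩ := h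
    cases pre <;> simp at h
  | seq A B iha ihb =>
    intro a ha hi
    obtain ⟨y₀, hy₀⟩ := paths_nonempty B
    obtain ⟨x, hx, hx'⟩ := iha (a := a) (fun x hx => by
      have := ha _ ⟨x, hx, y₀, hy₀, rfl⟩
      rw [← List.append_assoc] at this
      exact PrePaths.of_append this) (fun w l args D h => hi w l args D (.seqL h))
    obtain ⟨y, hy, hy'⟩ := ihb (a := a ++ x) (fun y hy => by
      rw [List.append_assoc]; exact ha _ ⟨x, hx, y, hy, rfl⟩)
      (fun w l args D h => hi w l args D (.seqR h))
    refine ⟨_, ⟨x, hx, y, hy, rfl⟩, fun r c b h => ?_⟩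
    exact (visFrom_append.1 h).elim (hx' r c b) (hy' r c b)
  | ite p l args A B iha ihb =>
    intro a ha hi
    cases hb : i p (args.map (hexec a)) with
    | true =>
      obtain ⟨x, hx, hx'⟩ := iha (a := a ++ [.prd p l args true]) (fun x hx => by
        have := ha _ (Or.inl ⟨x, hx, rfl⟩); simpa using this)
        (fun w l args D h => hi w l args D (.iteT h))
      refine ⟨_, Or.inl ⟨x, hx, rfl⟩, fun r c b h => ?_⟩
      rcases visFrom_cons_prd.1 h with ⟨rfl, rfl, rfl⟩ | h
      · exact hb
      · exact hx' r c b (visFrom_congr (hexec_snoc_prd _ _ _ _ _).symm h)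
    | false =>
      obtain ⟨x, hx, hx'⟩ := ihb (a := a ++ [.prd p l args false]) (fun x hx => by
        have := ha _ (Or.inr ⟨x, hx, rfl⟩); simpa using this)
        (fun w l args D h => hi w l args D (.iteF h))
      refine ⟨_, Or.inr ⟨x, hx, rfl⟩, fun r c b h => ?_⟩
      rcases visFrom_cons_prd.1 h with ⟨rfl, rfl, rfl⟩ | h
      · exact hb
      · exact hx' r c b (visFrom_congr (hexec_snoc_prd _ _ _ _ _).symm h)
  | whil p l args B ih =>
    intro a ha hi
    have hfin : {c | i p c = true}.Finite := hi p l args B (.refl _)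
    generalize hn : ({c | i p c = true} \ {c | VisFrom [] a p c true}).ncard = n
    induction n using Nat.strong_induction_on generalizing a with
    | _ n ihn =>
    cases hb : i p (args.map (hexec a)) with
    | false =>
      refine ⟨_, whil_path_nil p l args B, fun r c b h => ?_⟩
      obtain ⟨rfl, rfl, rfl⟩ := visFrom_single.1 h
      exact hb
    | true =>
      obtain ⟨x, hx, hx'⟩ := ih (a := a ++ [.prd p l args true]) (fun x hx => by
        have := ha _ (whil_path_cons hx (whil_path_nil p l args B))
        apply PrePaths.of_append (b := [.prd p l args false])
        simpa using this) (fun w l args D h => hi w l args D (.whilB h))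
      have ha' : ∀ y ∈ Paths (.whil p l args B),
          (a ++ .prd p l args true :: x) ++ y ∈ PrePaths S := fun y hy => by
        simpa using ha _ (whil_path_cons hx hy)
      have hlt : ({c | i p c = true} \
          {c | VisFrom [] (a ++ .prd p l args true :: x) p c true}).ncard < n := by
        rw [← hn]
        refine Set.ncard_lt_ncard ⟨?_, ?_⟩ (hfin.subset Set.sdiff_subset)
        · rintro c ⟨h1, h2⟩
          exact ⟨h1, fun h => h2 (visFrom_append.2 (Or.inl h))⟩
        · intro hsub
          have hmem : args.map (hexec a) ∈ {c | i p c = true} \ {c | VisFrom [] a p c true} := by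
            refine ⟨hb, fun h => ?_⟩
            have := ha _ (whil_path_nil p l args B)
            exact noRepeat hW hF this h (visFrom_single.2 ⟨rfl, rfl, rfl⟩)
          exact (hsub hmem).2 ⟨a, l, args, x, rfl, by simp⟩
      obtain ⟨y, hy, hy'⟩ := ihn _ hlt ha' rfl
      refine ⟨_, whil_path_cons hx hy, fun r c b h => ?_⟩
      rcases visFrom_cons_prd.1 h with ⟨rfl, rfl, rfl⟩ | h
      · exact hb
      · rcases visFrom_append.1 h with h | h
        · exact hx' r c b (visFrom_congr (hexec_snoc_prd _ _ _ _ _).symm h)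
        · refine hy' r c b (visFrom_congr ?_ h)
          funext v
          rw [hexec_append, hexec_append, hexec_cons_prd]

theorem exists_total_run {S : Schema} (hW : WellLabelled S) (hF : Free S) {i : HInterp}
    (hi : FinW i S) : ∃ σ ∈ Paths S, hAgrees i σ := by
  obtain ⟨x, hx, h⟩ := exists_run hW hF (a := []) (T := S)
    (fun x hx => PrePaths.of_path hx) hi
  exact ⟨x, hx, hAgrees_iff.2 h⟩

/-! ### Relevant predicates -/

/-- The predicate symbol `q` is relevant: it has a `qu`-couple. -/
def Rel (S : Schema) (u q : ℕ) : Prop := ∃ i j : HInterp, PUCouple S q u i j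

theorem rel_of {S : Schema} {u q : ℕ} {t : List Trm} {i j : HInterp} {σ τ : List Letter}
    (hne : i q t ≠ j q t) (hoff : ∀ r c, (r, c) ≠ (q, t) → i r c = j r c)
    (hσ : σ ∈ Paths S) (hτ : τ ∈ Paths S) (hi : hAgrees i σ) (hj : hAgrees j τ)
    (hu : hexec σ u ≠ hexec τ u) : Rel S u q :=
  ⟨i, j, t, ⟨hne, hoff⟩, σ, τ, ⟨hσ, hi⟩, ⟨hτ, hj⟩, hu⟩

open Classical in
/-- Changing an interpretation at finitely many predicate terms, one at a time: if the final
value of `u` changes, one of the changes is that of a couple. -/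
theorem hop_finite {S : Schema} (hW : WellLabelled S) (hF : Free S) {u : ℕ} {i' : HInterp}
    {σ' : List Letter} (hσ' : σ' ∈ Paths S) (h' : hAgrees i' σ') (D : Finset (ℕ × List Trm)) :
    ∀ {i : HInterp} {σ : List Letter}, FinSupp i → σ ∈ Paths S → hAgrees i σ →
      (∀ r c, (r, c) ∉ D → i r c = i' r c) → hexec σ u ≠ hexec σ' u →
      ∃ r c, i r c ≠ i' r c ∧ Rel S u r := by
  induction D using Finset.induction_on with
  | empty =>
    intro i σ _ hσ h hD hu
    have : i = i' := by funext r c; exact hD r c (by simp)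
    subst this
    exact (hu (by rw [run_unique hσ hσ' h h'])).elim
  | insert d D _ ih =>
    intro i σ hfin hσ h hD hu
    let k : HInterp := fun r c => if (r, c) = d then i' r c else i r c
    have hk : FinSupp k := by
      refine (hfin.union (Set.finite_singleton d)).subset ?_
      rintro ⟨r, c⟩ hrc
      by_cases he : (r, c) = d
      · exact Or.inr he
      · left; simpa [k, he] using hrc
    obtain ⟨τ, hτ, hkτ⟩ := exists_total_run hW hF (hk.finW S)
    by_cases hu' : hexec σ u = hexec τ u
    · obtain ⟨r, c, h1, h2⟩ := ih hk hτ hkτ (by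
        intro r c hrc
        by_cases he : (r, c) = d
        · simp [k, he]
        · simp only [k, he, if_false]; exact hD r c (by simp [he, hrc])) (hu' ▸ hu)
      refine ⟨r, c, ?_, h2⟩
      by_cases he : (r, c) = d
      · simp [k, he] at h1
      · simpa [k, he] using h1
    · have hne : i d.1 d.2 ≠ k d.1 d.2 := by
        intro he
        have : i = k := by
          funext r c
          by_cases hd : (r, c) = d
          · subst hd; exact he
          · simp [k, hd]
        rw [← this] at hkτ
        exact hu' (by rw [run_unique hσ hτ h hkτ])
      refine ⟨d.1, d.2, by simpa [k] using hne, rel_of hne ?_ hσ hτ h hkτ hu'⟩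
      intro r c hrc
      have : (r, c) ≠ d := hrc
      simp [k, this]

open Classical in
/-- The interpretation obtained from `i` by making every term outside `D` false. -/
noncomputable def restr (i : HInterp) (D : Set (ℕ × List Trm)) : HInterp :=
  fun r c => if (r, c) ∈ D then i r c else false

theorem restr_agrees {i : HInterp} {D : Set (ℕ × List Trm)} {σ : List Letter} (h : hAgrees i σ)
    (hD : ∀ r c b, VisFrom [] σ r c b → (r, c) ∈ D) : hAgrees (restr i D) σ := by
  rw [hAgrees_iff] at h ⊢
  intro r c b hv
  simp only [restr, hD r c b hv, if_true]
  exact h r c b hv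

theorem restr_finSupp {i : HInterp} {D : Set (ℕ × List Trm)} (h : D.Finite) :
    FinSupp (restr i D) := by
  refine h.subset ?_
  rintro ⟨r, c⟩ hrc
  by_contra hn
  simp [restr, hn] at hrc

/-- If two terminating interpretations give different final values of `u`, they differ on some
predicate term with a relevant predicate symbol. -/
theorem hop {S : Schema} (hW : WellLabelled S) (hF : Free S) {u : ℕ} {i i' : HInterp}
    {σ σ' : List Letter} (hσ : σ ∈ Paths S) (h : hAgrees i σ) (hσ' : σ' ∈ Paths S)
    (h' : hAgrees i' σ') (hu : hexec σ u ≠ hexec σ' u) :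
    ∃ r c, i r c ≠ i' r c ∧ Rel S u r := by
  let D : Set (ℕ × List Trm) :=
    {rc | ∃ b, VisFrom [] σ rc.1 rc.2 b} ∪ {rc | ∃ b, VisFrom [] σ' rc.1 rc.2 b}
  have hD : D.Finite := (visFrom_finite [] σ).union (visFrom_finite [] σ')
  obtain ⟨r, c, h1, h2⟩ := hop_finite hW hF (u := u) hσ' (restr_agrees (D := D) h'
    fun r c b hv => Or.inr ⟨b, hv⟩) hD.toFinset (restr_finSupp (i := i) hD) hσ
    (restr_agrees h fun r c b hv => Or.inl ⟨b, hv⟩)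
    (by intro r c hrc; simp only [Set.Finite.mem_toFinset] at hrc; simp [restr, hrc]) hu
  refine ⟨r, c, ?_, h2⟩
  intro he
  apply h1
  simp [restr, he]

open Classical in
/-- The interpretation that holds exactly at the terms visited with value `true` by `P`. -/
noncomputable def pathI (P : List Letter) : HInterp := fun r c => decide (VisFrom [] P r c true)

theorem pathI_true {P : List Letter} {r : ℕ} {c : List Trm} :
    pathI P r c = true ↔ VisFrom [] P r c true := by simp [pathI]

theorem pathI_of_vis {S : Schema} (hF : Free S) {P : List Letter} (hP : P ∈ PrePaths S) {r : ℕ}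
    {c : List Trm} {b : Bool} (h : VisFrom [] P r c b) : pathI P r c = b := by
  cases b with
  | true => exact pathI_true.2 h
  | false =>
    by_contra hn
    have := pathI_true.1 (by simpa using hn)
    have := vis_fun hF hP this h
    simp at this

theorem pathI_agrees {S : Schema} (hF : Free S) {P : List Letter} (hP : P ∈ PrePaths S) :
    hAgrees (pathI P) P := hAgrees_iff.2 fun _ _ _ h => pathI_of_vis hF hP h

theorem pathI_finSupp (P : List Letter) : FinSupp (pathI P) := by
  refine (visFrom_finite [] P).subset ?_
  rintro ⟨r, c⟩ h
  exact ⟨true, pathI_true.1 h⟩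

/-! ### Couples and their tails -/

/-- A couple, presented with its divergence data. -/
theorem rel_data {S : Schema} {u q : ℕ} (h : Rel S u q) :
    ∃ (i j : HInterp) (a : List Letter) (l : ℕ) (args : List ℕ) (τ₁ τ₂ : List Letter),
      a ++ .prd q l args true :: τ₁ ∈ Paths S ∧ a ++ .prd q l args false :: τ₂ ∈ Paths S ∧
      hAgrees i (a ++ .prd q l args true :: τ₁) ∧ hAgrees j (a ++ .prd q l args false :: τ₂) ∧
      (∀ r c, (r, c) ≠ (q, args.map (hexec a)) → i r c = j r c) ∧
      hexec (a ++ .prd q l args true :: τ₁) u ≠ hexec (a ++ .prd q l args false :: τ₂) u := by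
  obtain ⟨i, j, t, ⟨hne, hoff⟩, σ, τ, ⟨hσ, hi⟩, ⟨hτ, hj⟩, hu⟩ := h
  rcases runs_diverge hσ hτ hi hj with rfl | ⟨a, p, l, args, X, b, c, rfl, rfl, h1, h2⟩
  · exact (hu rfl).elim
  · have hpt : (p, args.map (hexec a)) = (q, t) := by
      by_contra hn
      have := hoff _ _ hn
      rw [h1, h2] at this
      cases X <;> simp at this
    cases hpt
    cases X with
    | true => exact ⟨i, j, a, l, args, b, c, hσ, hτ, hi, hj, hoff, hu⟩
    | false =>
      exact ⟨j, i, a, l, args, c, b, hτ, hσ, hj, hi, fun r c h => (hoff r c h).symm, hu.symm⟩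

/-- `TailPair S u q τ₁ τ₂`: continuations of the two values of `q` that give rise to a couple
whatever path leads to `q`. Compatibility and the final values of `u` are read off when the
tails are executed from the natural state. -/
structure TailPair (S : Schema) (u q : ℕ) (τ₁ τ₂ : List Letter) : Prop where
  head : ∃ ρ l args, ρ ++ .prd q l args true :: τ₁ ∈ Paths S ∧
    ρ ++ .prd q l args false :: τ₂ ∈ Paths S
  compat : ∀ r c b₁ b₂, VisFrom [] τ₁ r c b₁ → VisFrom [] τ₂ r c b₂ → b₁ = b₂
  ne : hexec τ₁ u ≠ hexec τ₂ u

theorem visFrom_path {ρ τ : List Letter} {q l : ℕ} {args : List ℕ} {X : Bool} {r : ℕ}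
    {c : List Trm} {b : Bool} :
    VisFrom [] (ρ ++ .prd q l args X :: τ) r c b ↔
      VisFrom [] ρ r c b ∨ (r = q ∧ c = args.map (hexec ρ) ∧ b = X) ∨ VisFrom ρ τ r c b := by
  rw [visFrom_append, List.nil_append, visFrom_cons_prd]

/-- The term tested at `q` is not visited again after that test. -/
theorem noRepeat_tail {S : Schema} (hW : WellLabelled S) (hF : Free S) {ρ τ : List Letter}
    {q l : ℕ} {args : List ℕ} {X : Bool} (h : ρ ++ .prd q l args X :: τ ∈ Paths S) {b : Bool} :
    ¬ VisFrom ρ τ q (args.map (hexec ρ)) b := by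
  intro hv
  have h' : (ρ ++ [.prd q l args X]) ++ τ ∈ PrePaths S := PrePaths.of_path (by simpa using h)
  exact noRepeat hW hF h' (visFrom_append.2 (Or.inr (visFrom_single.2 ⟨rfl, by simp, rfl⟩)))
    (visFrom_congr (hexec_snoc_prd _ _ _ _ _).symm hv)

theorem tailPair_of_couple {S : Schema} (hW : WellLabelled S) (hF : Free S) {u q : ℕ}
    {i j : HInterp} {a τ₁ τ₂ : List Letter} {l : ℕ} {args : List ℕ}
    (h1 : a ++ .prd q l args true :: τ₁ ∈ Paths S)
    (h2 : a ++ .prd q l args false :: τ₂ ∈ Paths S)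
    (hi : hAgrees i (a ++ .prd q l args true :: τ₁))
    (hj : hAgrees j (a ++ .prd q l args false :: τ₂))
    (hoff : ∀ r c, (r, c) ≠ (q, args.map (hexec a)) → i r c = j r c)
    (hu : hexec (a ++ .prd q l args true :: τ₁) u ≠ hexec (a ++ .prd q l args false :: τ₂) u) :
    TailPair S u q τ₁ τ₂ where
  head := ⟨a, l, args, h1, h2⟩
  compat := by
    intro r c b₁ b₂ hv₁ hv₂
    have hv₁ := visFrom_subst hv₁ a
    have hv₂ := visFrom_subst hv₂ a
    have e1 := hAgrees_iff.1 hi _ _ _ (visFrom_path.2 (Or.inr (Or.inr hv₁)))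
    have e2 := hAgrees_iff.1 hj _ _ _ (visFrom_path.2 (Or.inr (Or.inr hv₂)))
    rw [← e1, ← e2]
    refine hoff _ _ fun he => ?_
    simp only [Prod.mk.injEq] at he
    obtain ⟨rfl, he⟩ := he
    rw [he] at hv₁
    exact noRepeat_tail hW hF h1 hv₁
  ne := by
    intro he
    apply hu
    rw [hexec_append, hexec_append, hexec_cons_prd, hexec_cons_prd, he]

theorem TailPair.paths {S : Schema} (hW : WellLabelled S) (hP : PredLinear S) {u q : ℕ}
    {τ₁ τ₂ : List Letter} (h : TailPair S u q τ₁ τ₂) {ρ b : List Letter} {l : ℕ} {args : List ℕ}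
    {X : Bool} (hρ : ρ ++ .prd q l args X :: b ∈ Paths S) :
    ρ ++ .prd q l args true :: τ₁ ∈ Paths S ∧ ρ ++ .prd q l args false :: τ₂ ∈ Paths S := by
  obtain ⟨ρ', l', args', h1, h2⟩ := h.head
  have hz := letIn_of_path hρ (z := .prd q l args X) (by simp)
  have hz' := letIn_of_path h1 (z := .prd q l' args' true) (by simp)
  obtain rfl : l = l' := hP.label_unique hz.lsym hz'.lsym
  rcases letter_unique hW hz hz' rfl with ⟨_, _, _, _, h, -⟩ | ⟨_, _, _, _, _, h, h'⟩
  · cases h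
  · cases h; cases h'
    exact ⟨splice hW hρ h1 rfl, splice hW hρ h2 rfl⟩

open Classical in
/-- A tail pair yields a couple with any prescribed head. -/
theorem TailPair.realise {S : Schema} (hF : Free S) (hL : Liberal S)
    {u q : ℕ} {τ₁ τ₂ : List Letter} (h : TailPair S u q τ₁ τ₂) {ρ : List Letter} {l : ℕ}
    {args : List ℕ}
    (h1 : ρ ++ .prd q l args true :: τ₁ ∈ Paths S)
    (h2 : ρ ++ .prd q l args false :: τ₂ ∈ Paths S) :
    ∃ i j : HInterp, FinSupp i ∧ FinSupp j ∧ hAgrees i (ρ ++ .prd q l args true :: τ₁) ∧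
      hAgrees j (ρ ++ .prd q l args false :: τ₂) ∧
      (∀ r c, (r, c) ≠ (q, args.map (hexec ρ)) → i r c = j r c) ∧
      hexec (ρ ++ .prd q l args true :: τ₁) u ≠ hexec (ρ ++ .prd q l args false :: τ₂) u ∧
      (∀ r c, i r c = true → VisFrom [] (ρ ++ .prd q l args true :: τ₁) r c true ∨
        VisFrom [] (ρ ++ .prd q l args false :: τ₂) r c true) := by
  have p1 := PrePaths.of_path h1
  have p2 := PrePaths.of_path h2
  have tails : ∀ r c b b', VisFrom ρ τ₁ r c b → VisFrom ρ τ₂ r c b' → b = b' := by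
    intro r c b b' hv hv'
    obtain ⟨c₁, hc₁, e₁⟩ := visFrom_unsubst hv
    obtain ⟨c₂, hc₂, e₂⟩ := visFrom_unsubst hv'
    have : c₁ = c₂ := vis_cancel hF hL p1 p2 (visFrom_cons_prd.2 (Or.inr hc₁))
      (visFrom_cons_prd.2 (Or.inr hc₂)) (e₁.symm.trans e₂)
    subst this
    exact h.compat _ _ _ _ hc₁ hc₂
  -- off the tested term, the two complete paths give every common term the same value
  have both : ∀ r c b b', (r, c) ≠ (q, args.map (hexec ρ)) →
      VisFrom [] (ρ ++ .prd q l args true :: τ₁) r c b →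
      VisFrom [] (ρ ++ .prd q l args false :: τ₂) r c b' → b = b' := by
    intro r c b b' hne hv hv'
    rcases visFrom_path.1 hv with hv1 | ⟨rfl, rfl, -⟩ | hv1
    · exact vis_fun hF p2 (visFrom_path.2 (Or.inl hv1)) hv'
    · exact (hne rfl).elim
    · rcases visFrom_path.1 hv' with hv2 | ⟨rfl, rfl, -⟩ | hv2
      · exact vis_fun hF p1 hv (visFrom_path.2 (Or.inl hv2))
      · exact (hne rfl).elim
      · exact tails _ _ _ _ hv1 hv2
  let i : HInterp := fun r c => pathI (ρ ++ .prd q l args true :: τ₁) r c ||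
    pathI (ρ ++ .prd q l args false :: τ₂) r c
  let j : HInterp := fun r c => if (r, c) = (q, args.map (hexec ρ)) then false else i r c
  have t1 : VisFrom [] (ρ ++ .prd q l args true :: τ₁) q (args.map (hexec ρ)) true :=
    visFrom_path.2 (Or.inr (Or.inl ⟨rfl, rfl, rfl⟩))
  have t2 : VisFrom [] (ρ ++ .prd q l args false :: τ₂) q (args.map (hexec ρ)) false :=
    visFrom_path.2 (Or.inr (Or.inl ⟨rfl, rfl, rfl⟩))
  have fi : FinSupp i := by
    refine ((pathI_finSupp (ρ ++ .prd q l args true :: τ₁)).union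
      (pathI_finSupp (ρ ++ .prd q l args false :: τ₂))).subset ?_
    rintro ⟨r, c⟩ hrc
    simpa [i, Bool.or_eq_true] using hrc
  refine ⟨i, j, fi, ?_, ?_, ?_, ?_, ?_, ?_⟩
  · refine fi.subset ?_
    rintro ⟨r, c⟩ hrc
    by_cases he : (r, c) = (q, args.map (hexec ρ))
    · simp [j, he] at hrc
    · have hrc' : j r c = true := hrc
      simp only [j, he, if_false] at hrc'
      exact hrc'
  · rw [hAgrees_iff]
    intro r c b hv
    have e1 := pathI_of_vis hF p1 hv
    simp only [i, e1]
    cases b with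
    | true => rfl
    | false =>
      rw [Bool.false_or]
      by_contra hn
      have hn := pathI_true.1 (by simpa using hn)
      by_cases he : (r, c) = (q, args.map (hexec ρ))
      · cases he
        have := vis_fun hF p1 hv t1
        simp at this
      · have := both _ _ _ _ he hv hn
        simp at this
  · rw [hAgrees_iff]
    intro r c b hv
    by_cases he : (r, c) = (q, args.map (hexec ρ))
    · simp only [j, he, if_true]
      cases he
      exact vis_fun hF p2 t2 hv
    · have e1 := pathI_of_vis hF p2 hv
      simp only [j, he, if_false, i, e1]
      cases b with
      | true => simp
      | false =>
        rw [Bool.or_false]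
        by_contra hn
        have hn := pathI_true.1 (by simpa using hn)
        have := both _ _ _ _ he hn hv
        simp at this
  · intro r c he
    simp only [j, he, if_false]
  · intro he
    have := cancel hF hL _ le_rfl p1 p2 u u he
    exact h.ne this
  · intro r c hrc
    simp only [i, Bool.or_eq_true] at hrc
    exact hrc.imp pathI_true.1 pathI_true.1

/-! ### Control -/

/-- Fixing `p` to the value that bypasses `q` makes the two sides of a `qu`-couple equal, so `p`
must matter to one of them. -/
theorem rel_of_avoid {S : Schema} (hW : WellLabelled S) (hP : PredLinear S) (hF : Free S)
    {u : ℕ} {N : Schema} (hN : Occurs N S) {p l : ℕ} {args : List ℕ} {Z : Bool} {q m : ℕ}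
    (hmem : LSym.pr q m ∈ lsymSet N)
    (havoid : ∀ x ∈ Paths N, ∀ z ∈ x, lsymOf z = .pr q m → Letter.prd p l args Z ∈ x)
    (hfin : ∀ i : HInterp, FinSupp i → FinW (fun r c => if r = p then !Z else i r c) S)
    (hq : Rel S u q) : Rel S u p := by
  obtain ⟨i, j, a, l', args', τ₁, τ₂, h1, h2, hi, hj, hoff, hu⟩ := rel_data hq
  generalize hP1 : a ++ .prd q l' args' true :: τ₁ = P₁ at *
  generalize hP2 : a ++ .prd q l' args' false :: τ₂ = P₂ at *
  let D : Set (ℕ × List Trm) :=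
    {rc | ∃ b, VisFrom [] P₁ rc.1 rc.2 b} ∪ {rc | ∃ b, VisFrom [] P₂ rc.1 rc.2 b}
  have hD : D.Finite := (visFrom_finite [] P₁).union (visFrom_finite [] P₂)
  have hi1 : hAgrees (restr i D) P₁ := restr_agrees hi fun r c b hv => Or.inl ⟨b, hv⟩
  have hj1 : hAgrees (restr j D) P₂ := restr_agrees hj fun r c b hv => Or.inr ⟨b, hv⟩
  obtain ⟨σ, hσ, hiσ⟩ := exists_total_run hW hF (hfin _ (restr_finSupp (i := i) hD))
  obtain ⟨τ, hτ, hjτ⟩ := exists_total_run hW hF (hfin _ (restr_finSupp (i := j) hD))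
  have hστ : σ = τ := by
    rcases runs_diverge hσ hτ hiσ hjτ with h | ⟨b, r, k, brgs, X, c, d, hs, -, e1, e2⟩
    · exact h
    · exfalso
      by_cases hr : r = p
      · simp only [hr, if_true] at e1 e2
        rw [e1] at e2
        cases X <;> simp at e2
      simp only [hr, if_false] at e1 e2
      have hrq : r = q := by
        by_contra hn
        have : restr i D r (brgs.map (hexec b)) = restr j D r (brgs.map (hexec b)) := by
          simp only [restr]
          rw [hoff _ _ (by simp [hn])]
        rw [e1, e2] at this
        cases X <;> simp at this
      subst hrq
      subst hs
      have hk : k = m := hP.label_unique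
        (lsym_of_path hσ (z := .prd r k brgs X) (by simp)) (hN.lsymSet_subset hmem)
      subst hk
      obtain ⟨a₀, x₁, x₂, b₀, rfl, rfl, hx, -⟩ := node_decomp hN hW hσ hmem
      have hz := havoid _ hx (.prd r k brgs X) (by simp) rfl
      have hz' : Letter.prd p l args Z ∈ a₀ ++ (x₁ ++ .prd r k brgs X :: x₂) ++ b₀ := by
        simp only [List.mem_append] at hz ⊢; tauto
      obtain ⟨s, t, hst⟩ := List.append_of_mem hz'
      have := hAgrees_iff.1 hiσ p (args.map (hexec s)) Z
        ⟨s, l, args, t, by rw [← hst]; simp, by simp⟩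
      simp at this
  subst hστ
  have key : ∀ {k : HInterp} {P : List Letter}, P ∈ Paths S → hAgrees (restr k D) P →
      hAgrees (fun r c => if r = p then !Z else restr k D r c) σ → hexec P u ≠ hexec σ u →
      Rel S u p := by
    intro k P hP hk hkσ hne
    obtain ⟨r, c, h3, h4⟩ := hop hW hF hP hk hσ hkσ hne
    by_cases hr : r = p
    · exact hr ▸ h4
    · simp [hr] at h3
  by_cases he : hexec P₁ u = hexec σ u
  · exact key h2 hj1 hjτ fun h => hu (he.trans h.symm)
  · exact key h1 hi1 hiσ he

theorem ite_not_whil {S : Schema} (hW : WellLabelled S) (hP : PredLinear S) {p l : ℕ}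
    {args : List ℕ} {t e : Schema} (hN : Occurs (.ite p l args t e) S) {l' : ℕ} {args' : List ℕ}
    {B : Schema} (hO : Occurs (.whil p l' args' B) S) : False := by
  have hl : l' = l := hP.label_unique (hO.lsymSet_subset (Or.inl rfl))
    (hN.lsymSet_subset (Or.inl rfl))
  subst hl
  have hh := (hW.of_occurs hN).ite_head
  have := whil_occurs_of_mem hN hW hO (Or.inl rfl)
  cases this with
  | iteT h => exact hh.1 (h.lsymSet_subset (Or.inl rfl))
  | iteF h => exact hh.2 (h.lsymSet_subset (Or.inl rfl))

theorem finW_override {S : Schema} {p : ℕ} {Z : Bool}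
    (h : Z = true ∨ ∀ l' args' B, ¬ Occurs (.whil p l' args' B) S) {i : HInterp}
    (hi : FinSupp i) : FinW (fun r c => if r = p then !Z else i r c) S := by
  intro w l args B hO
  by_cases hw : w = p
  · subst hw
    rcases h with rfl | h
    · simp
    · exact (h _ _ _ hO).elim
  · simp only [hw, if_false]
    exact hi.finW S w l args B hO

/-- Control propagates relevance to the controlling predicate. -/
theorem rel_of_controls {S : Schema} (hW : WellLabelled S) (hP : PredLinear S) (hF : Free S)
    {u p l q m : ℕ} (hc : ControlsL S p l (.pr q m)) (hq : Rel S u q) : Rel S u p := by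
  rcases hc with ⟨args, t, e, hN, hm⟩ | ⟨args, B, hN, hm⟩
  · have hWN := hW.of_occurs hN
    have hnw := fun l' args' B hO => ite_not_whil hW hP hN (l' := l') (args' := args') (B := B) hO
    rcases hm with hm | hm
    · refine rel_of_avoid hW hP hF hN (Z := true) (l := l) (args := args)
        (Or.inr (Or.inl hm)) ?_ (fun i hi => finW_override (Or.inr hnw) hi) hq
      rintro x (⟨s, hs, rfl⟩ | ⟨s, hs, rfl⟩) z hz he
      · simp
      · rcases List.mem_cons.1 hz with rfl | hz
        · exact (hWN.ite_head.1 (by rw [← he] at hm; exact hm)).elim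
        · have := lsym_of_path hs hz
          rw [he] at this
          exact (hWN.ite_disj hm this).elim
    · refine rel_of_avoid hW hP hF hN (Z := false) (l := l) (args := args)
        (Or.inr (Or.inr hm)) ?_ (fun i hi => finW_override (Or.inr hnw) hi) hq
      rintro x (⟨s, hs, rfl⟩ | ⟨s, hs, rfl⟩) z hz he
      · rcases List.mem_cons.1 hz with rfl | hz
        · exact (hWN.ite_head.2 (by rw [← he] at hm; exact hm)).elim
        · have := lsym_of_path hs hz
          rw [he] at this
          exact (hWN.ite_disj this hm).elim
      · simp
  · have hWN := hW.of_occurs hN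
    refine rel_of_avoid hW hP hF hN (Z := true) (l := l) (args := args)
      (Or.inr hm) ?_ (fun i hi => finW_override (Or.inl rfl) hi) hq
    rintro x ⟨n, hx⟩ z hz he
    cases n with
    | zero =>
      rw [show x = _ from hx] at hz
      simp only [List.mem_singleton] at hz
      subst hz
      exact (hWN.whil_head (by rw [← he] at hm; exact hm)).elim
    | succ n =>
      obtain ⟨s, hs, y, hy, rfl⟩ := hx
      simp

/-! ### Feeding a relevant predicate -/

/-- `N` is the if- or while-statement guarded by the labelled predicate `p^(l)`. -/
def IsNode (N : Schema) (p l : ℕ) : Prop :=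
  (∃ args t e, N = .ite p l args t e) ∨ (∃ args B, N = .whil p l args B)

theorem IsNode.controls {S N : Schema} {p l : ℕ} (h : IsNode N p l) (hN : Occurs N S) {x : LSym}
    (hx : x ∈ lsymSet N) : x = .pr p l ∨ ControlsL S p l x := by
  rcases h with ⟨args, t, e, rfl⟩ | ⟨args, B, rfl⟩
  · rcases hx with hx | hx
    · exact Or.inl hx
    · exact Or.inr (Or.inl ⟨args, t, e, hN, hx⟩)
  · rcases hx with hx | hx
    · exact Or.inl hx
    · exact Or.inr (Or.inr ⟨args, B, hN, hx⟩)

theorem parts_ne {A B : Schema} {v : ℕ} {x y : List Letter} (hx : x ∈ Paths A) (hy : y ∈ Paths B)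
    (hn : ¬ NoAsn x v) (h : ∀ f, AssignsWith A f v → AssignsWith B f v → False) :
    hexec x v ≠ hexec y v := by
  rcases noAsn_or_last x v with h1 | ⟨x₁, f, l, args, x₂, rfl, h1⟩
  · exact (hn h1).elim
  rw [hexec_last h1]
  rcases noAsn_or_last y v with h2 | ⟨y₁, g, m, brgs, y₂, rfl, h2⟩
  · rw [h2.hexec]; simp
  · rw [hexec_last h2]
    intro he
    simp only [Trm.app.injEq] at he
    obtain ⟨rfl, -⟩ := he
    exact h f (letIn_of_path hx (z := .asn v f l args) (by simp)).assignsWith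
      (letIn_of_path hy (z := .asn v f m brgs) (by simp)).assignsWith

/-- Flipping `p` alters any variable assigned below `p`: some path `α` through the statement
guarded by `p` gives `v` a value different from that given by a path `β` which, apart from `p`,
obeys a prescribed interpretation. -/
theorem node_paths {S : Schema} (hW : WellLabelled S) (hF : Free S) (hI : IfPartsCondition S)
    {N : Schema} (hN : Occurs N S) {p l : ℕ} (hnode : IsNode N p l) {v : ℕ}
    (hv : AssignsTo N v) :
    ∃ α ∈ Paths N, ∀ (a : List Letter) (i : HInterp), (∀ x ∈ Paths N, a ++ x ∈ PrePaths S) →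
      FinSupp i → ∃ β ∈ Paths N, hexec α v ≠ hexec β v ∧
        ∀ r c b, VisFrom a β r c b → r ≠ p → i r c = b := by
  rcases hnode with ⟨args, t, e, rfl⟩ | ⟨args, B, rfl⟩
  · rcases hv with hv | hv
    · obtain ⟨x, hx, hn⟩ := hv.exists_path
      refine ⟨_, Or.inl ⟨x, hx, rfl⟩, fun a i ha hi => ?_⟩
      obtain ⟨y, hy, hy'⟩ := exists_run hW hF (T := e) (a := a ++ [.prd p l args false])
        (fun y hy => by have := ha _ (Or.inr ⟨y, hy, rfl⟩); simpa using this) (hi.finW e)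
      refine ⟨_, Or.inr ⟨y, hy, rfl⟩, ?_, fun r c b h hr => ?_⟩
      · rw [hexec_cons_prd, hexec_cons_prd]
        exact parts_ne hx hy hn fun f h1 h2 => hI p l args t e hN f v h1 h2
      · rcases visFrom_cons_prd.1 h with ⟨rfl, -, -⟩ | h
        · exact (hr rfl).elim
        · exact hy' r c b (visFrom_congr (hexec_snoc_prd _ _ _ _ _).symm h)
    · obtain ⟨x, hx, hn⟩ := hv.exists_path
      refine ⟨_, Or.inr ⟨x, hx, rfl⟩, fun a i ha hi => ?_⟩
      obtain ⟨y, hy, hy'⟩ := exists_run hW hF (T := t) (a := a ++ [.prd p l args true])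
        (fun y hy => by have := ha _ (Or.inl ⟨y, hy, rfl⟩); simpa using this) (hi.finW t)
      refine ⟨_, Or.inl ⟨y, hy, rfl⟩, ?_, fun r c b h hr => ?_⟩
      · rw [hexec_cons_prd, hexec_cons_prd]
        exact parts_ne hx hy hn fun f h1 h2 => hI p l args t e hN f v h2 h1
      · rcases visFrom_cons_prd.1 h with ⟨rfl, -, -⟩ | h
        · exact (hr rfl).elim
        · exact hy' r c b (visFrom_congr (hexec_snoc_prd _ _ _ _ _).symm h)
  · obtain ⟨x, hx, hn⟩ := AssignsTo.exists_path (S := B) hv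
    refine ⟨_, whil_path_cons hx (whil_path_nil p l args B), fun a i ha hi =>
      ⟨_, whil_path_nil p l args B, ?_, fun r c b h hr => ?_⟩⟩
    · rw [hexec_cons_prd, hexec_cons_prd, hexec_snoc_prd]
      exact parts_ne (B := .skip) hx rfl hn fun f _ h => h
    · exact (hr (visFrom_single.1 h).1).elim

/-- No relevant predicate visited along `μ` depends on a variable assigned in `N`. -/
def Sep (S : Schema) (u : ℕ) (N : Schema) (μ : List Letter) : Prop :=
  ∀ μ₁ r m args X μ₂, μ = μ₁ ++ .prd r m args X :: μ₂ → Rel S u r → ∀ w ∈ args, ∀ v,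
    VarIn v (hexec μ₁ w) → ¬ AssignsTo N v

theorem Sep.vis {S N : Schema} {u : ℕ} {μ : List Letter} (h : Sep S u N μ) {a α β : List Letter}
    (hα : α ∈ Paths N) (hβ : β ∈ Paths N) {r : ℕ} {c : List Trm} {b : Bool} (hr : Rel S u r)
    (hv : VisFrom (a ++ α) μ r c b) : VisFrom (a ++ β) μ r c b := by
  obtain ⟨pre, l, args, post, rfl, rfl⟩ := hv
  refine ⟨pre, l, args, post, rfl, List.map_congr_left fun w hw => ?_⟩
  rw [hexec_append, hexec_append]
  refine subst_congr _ fun v hv => ?_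
  have hn := h _ _ _ _ _ _ rfl hr w hw v hv
  rw [(noAsn_of_not_assignsTo hn hα).hexec_append, (noAsn_of_not_assignsTo hn hβ).hexec_append]

open Classical in
/-- The interpretation equal to `i` on relevant predicates and realising `ρ` on the others. -/
noncomputable def mix (S : Schema) (u : ℕ) (i : HInterp) (ρ : List Letter) : HInterp :=
  fun r c => if Rel S u r then i r c else pathI ρ r c

theorem mix_rel {S : Schema} {u r : ℕ} {i : HInterp} {ρ : List Letter} (h : Rel S u r)
    (c : List Trm) : mix S u i ρ r c = i r c := by simp [mix, h]

theorem mix_irrel {S : Schema} {u r : ℕ} {i : HInterp} {ρ : List Letter} (h : ¬ Rel S u r)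
    (c : List Trm) : mix S u i ρ r c = pathI ρ r c := by simp [mix, h]

theorem mix_finSupp {S : Schema} {u : ℕ} {i : HInterp} {ρ : List Letter} (h : FinSupp i) :
    FinSupp (mix S u i ρ) := by
  refine (h.union (pathI_finSupp ρ)).subset ?_
  rintro ⟨r, c⟩ hrc
  have hrc' : mix S u i ρ r c = true := hrc
  by_cases hr : Rel S u r
  · rw [mix_rel hr] at hrc'; exact Or.inl hrc'
  · rw [mix_irrel hr] at hrc'; exact Or.inr hrc'

/-- Changing irrelevant predicates only does not change the final value of `u`. -/
theorem mix_value {S : Schema} (hW : WellLabelled S) (hF : Free S) {u : ℕ} {i : HInterp}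
    {ρ σ σ' : List Letter} (hσ : σ ∈ Paths S) (h : hAgrees i σ) (hσ' : σ' ∈ Paths S)
    (h' : hAgrees (mix S u i ρ) σ') : hexec σ u = hexec σ' u := by
  by_contra hu
  obtain ⟨r, c, h1, h2⟩ := hop hW hF hσ h hσ' h' hu
  rw [mix_rel h2] at h1
  exact h1 rfl

theorem mix_agrees {S : Schema} (hF : Free S) {u : ℕ} {N : Schema} {p : ℕ} (hp : ¬ Rel S u p)
    {a α β μ : List Letter} (hα : α ∈ Paths N) (hβ : β ∈ Paths N) (hsep : Sep S u N μ)
    {i : HInterp} (hi : hAgrees i (a ++ α ++ μ))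
    (hiβ : ∀ r c b, VisFrom a β r c b → r ≠ p → i r c = b)
    (hB : a ++ β ++ μ ∈ PrePaths S) : hAgrees (mix S u i (a ++ β ++ μ)) (a ++ β ++ μ) := by
  rw [hAgrees_iff] at hi ⊢
  intro r c b hv
  by_cases hr : Rel S u r
  · rw [mix_rel hr]
    rcases visFrom_append.1 hv with hv | hv
    · rcases visFrom_append.1 hv with hv | hv
      · exact hi _ _ _ (visFrom_append.2 (Or.inl (visFrom_append.2 (Or.inl hv))))
      · exact hiβ _ _ _ hv fun h => hp (h ▸ hr)
    · exact hi _ _ _ (visFrom_append.2 (Or.inr (hsep.vis hβ hα hr hv)))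
  · rw [mix_irrel hr]
    exact pathI_of_vis hF hB hv

/-- The predicate terms outside `N` visited with value `true` by one of two tails after `ρ`. -/
def Cnt (N : Schema) (ρ τ₁ τ₂ : List Letter) : Set (ℕ × List Trm) :=
  {rc | (∀ l, LSym.pr rc.1 l ∉ lsymSet N) ∧
    (VisFrom ρ τ₁ rc.1 rc.2 true ∨ VisFrom ρ τ₂ rc.1 rc.2 true)}

theorem cnt_finite (N : Schema) (ρ τ₁ τ₂ : List Letter) : (Cnt N ρ τ₁ τ₂).Finite := by
  refine ((visFrom_finite ρ τ₁).union (visFrom_finite ρ τ₂)).subset ?_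
  rintro rc ⟨-, h | h⟩
  · exact Or.inl ⟨_, h⟩
  · exact Or.inr ⟨_, h⟩

theorem cnt_image (N : Schema) (ρ τ₁ τ₂ : List Letter) :
    Cnt N ρ τ₁ τ₂ =
      (fun rc : ℕ × List Trm => (rc.1, rc.2.map (Trm.subst (hexec ρ)))) '' Cnt N [] τ₁ τ₂ := by
  ext ⟨r, c⟩
  constructor
  · rintro ⟨h0, h | h⟩ <;> obtain ⟨c₀, h1, rfl⟩ := visFrom_unsubst h
    · exact ⟨(r, c₀), ⟨h0, Or.inl h1⟩, rfl⟩
    · exact ⟨(r, c₀), ⟨h0, Or.inr h1⟩, rfl⟩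
  · rintro ⟨⟨r', c'⟩, ⟨h0, h⟩, he⟩
    cases he
    exact ⟨h0, h.imp (fun h => visFrom_subst h ρ) (fun h => visFrom_subst h ρ)⟩

theorem cnt_ncard_le (N : Schema) (ρ τ₁ τ₂ : List Letter) :
    (Cnt N ρ τ₁ τ₂).ncard ≤ (Cnt N [] τ₁ τ₂).ncard := by
  rw [cnt_image]
  exact Set.ncard_image_le (cnt_finite N [] τ₁ τ₂)

theorem cnt_ncard_eq {S : Schema} (hF : Free S) (hL : Liberal S) (N : Schema)
    {ρ τ₁ τ₂ : List Letter} {q l : ℕ} {args : List ℕ}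
    (h1 : ρ ++ .prd q l args true :: τ₁ ∈ Paths S)
    (h2 : ρ ++ .prd q l args false :: τ₂ ∈ Paths S) :
    (Cnt N ρ τ₁ τ₂).ncard = (Cnt N [] τ₁ τ₂).ncard := by
  rw [cnt_image]
  refine Set.InjOn.ncard_image ?_
  have p1 := PrePaths.of_path h1
  have p2 := PrePaths.of_path h2
  have norm : ∀ rc ∈ Cnt N [] τ₁ τ₂, ∃ x, ρ ++ x ∈ PrePaths S ∧ VisFrom [] x rc.1 rc.2 true := by
    rintro rc ⟨-, h | h⟩
    · exact ⟨_, p1, visFrom_cons_prd.2 (Or.inr h)⟩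
    · exact ⟨_, p2, visFrom_cons_prd.2 (Or.inr h)⟩
  rintro ⟨r, c⟩ hc ⟨r', c'⟩ hc' he
  simp only [Prod.mk.injEq] at he
  obtain ⟨x, hx, hv⟩ := norm _ hc
  obtain ⟨x', hx', hv'⟩ := norm _ hc'
  rw [Prod.mk.injEq]
  exact ⟨he.1, vis_cancel hF hL hx hx' hv hv' he.2⟩

/-- The descent step. Suppose `N`, guarded by the irrelevant `p`, feeds the relevant `q` along
`μ`. A tail pair for `q` is realised after a path `α` through `N`; rerouting through `β` changes
the term tested by `q`, so the corresponding couple must come back to `q` later with the old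
term, around a loop outside `N`. The tails of that couple visit strictly fewer terms. -/
theorem feed_descent {S : Schema} (hS : Special S) {u : ℕ} {N : Schema} (hN : Occurs N S)
    {p l : ℕ} (hnode : IsNode N p l) (hp : ¬ Rel S u p) {a μ b₂ : List Letter} {q m : ℕ}
    {args : List ℕ} {X : Bool} {w v : ℕ}
    (hpath : ∀ x ∈ Paths N, a ++ x ++ (μ ++ .prd q m args X :: b₂) ∈ Paths S)
    (hq : Rel S u q) (hw : w ∈ args) (hvw : VarIn v (hexec μ w)) (hv : AssignsTo N v)
    (hsep : Sep S u N μ) {τ₁ τ₂ : List Letter} (hT : TailPair S u q τ₁ τ₂) :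
    ∃ τ₁' τ₂', TailPair S u q τ₁' τ₂' ∧ (Cnt N [] τ₁' τ₂').ncard < (Cnt N [] τ₁ τ₂).ncard := by
  obtain ⟨hW, hP, hF, hL, hI⟩ := hS
  have hqS : LSym.pr q m ∈ lsymSet S := by
    obtain ⟨x, hx⟩ := paths_nonempty N
    exact lsym_of_path (hpath x hx) (z := .prd q m args X) (by simp)
  have hqN : ∀ k, LSym.pr q k ∉ lsymSet N := by
    intro k hk
    rcases hnode.controls hN hk with h | h
    · cases h; exact hp hq
    · exact hp (rel_of_controls hW hP hF h hq)
  have hpre : ∀ x ∈ Paths N, a ++ x ∈ PrePaths S := fun x hx =>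
    PrePaths.of_append (PrePaths.of_path (hpath x hx))
  obtain ⟨α, hα, hnp⟩ := node_paths hW hF hI hN hnode hv
  have hA : (a ++ α ++ μ) ++ .prd q m args X :: b₂ ∈ Paths S := by simpa using hpath α hα
  obtain ⟨h1, h2⟩ := hT.paths hW hP hA
  obtain ⟨i, j, fi, fj, hi, hj, hoff, hu, hsupp⟩ := hT.realise hF hL h1 h2
  obtain ⟨β, hβ, hne, hiβ⟩ := hnp a i hpre fi
  have hB : (a ++ β ++ μ) ++ .prd q m args X :: b₂ ∈ Paths S := by simpa using hpath β hβ
  have hBpre : a ++ β ++ μ ∈ PrePaths S := PrePaths.of_append (PrePaths.of_path hB)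
  set t := args.map (hexec (a ++ α ++ μ)) with ht
  set t' := args.map (hexec (a ++ β ++ μ)) with ht'
  have htt : t' ≠ t := by
    intro he
    have h3 : hexec (a ++ β ++ μ) w = hexec (a ++ α ++ μ) w :=
      (List.map_inj_left.1 he) w hw
    rw [hexec_append, hexec_append] at h3
    refine hvw.subst_ne ?_ h3.symm
    exact fun h4 => hne (cancel hF hL _ le_rfl (hpre α hα) (hpre β hβ) v v h4)
  have itq : i q t = true := hAgrees_iff.1 hi _ _ _ (visFrom_path.2 (Or.inr (Or.inl ⟨rfl, rfl, rfl⟩)))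
  have jtq : j q t = false :=
    hAgrees_iff.1 hj _ _ _ (visFrom_path.2 (Or.inr (Or.inl ⟨rfl, rfl, rfl⟩)))
  have hjβ : ∀ r c b, VisFrom a β r c b → r ≠ p → j r c = b := by
    intro r c b hv hr
    rw [← hoff r c ?_]
    · exact hiβ r c b hv hr
    · intro he
      cases he
      obtain ⟨pre, k, brgs, post, rfl, -⟩ := hv
      exact hqN k (lsym_of_path hβ (z := .prd q k brgs b) (by simp))
  have agA : ∀ {k : HInterp} {τ : List Letter} {Y : Bool},
      hAgrees k ((a ++ α ++ μ) ++ .prd q m args Y :: τ) → hAgrees k (a ++ α ++ μ) := by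
    intro k τ Y h
    rw [hAgrees_iff] at h ⊢
    exact fun r c b hv => h r c b (visFrom_path.2 (Or.inl hv))
  set i' := mix S u i (a ++ β ++ μ) with hi'
  set j' := mix S u j (a ++ β ++ μ) with hj'
  have hi'B : hAgrees i' (a ++ β ++ μ) := mix_agrees hF hp hα hβ hsep (agA hi) hiβ hBpre
  have hj'B : hAgrees j' (a ++ β ++ μ) := mix_agrees hF hp hα hβ hsep (agA hj) hjβ hBpre
  obtain ⟨σ, hσ, hiσ⟩ : ∃ σ ∈ Paths S, hAgrees i' σ :=
    exists_total_run hW hF ((mix_finSupp fi : FinSupp i').finW S)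
  obtain ⟨τ, hτ, hjτ⟩ : ∃ τ ∈ Paths S, hAgrees j' τ :=
    exists_total_run hW hF ((mix_finSupp fj : FinSupp j').finW S)
  have hoff' : ∀ r c, (r, c) ≠ (q, t) → i' r c = j' r c := by
    intro r c hrc
    by_cases hr : Rel S u r
    · rw [hi', hj', mix_rel hr, mix_rel hr, hoff r c hrc]
    · rw [hi', hj', mix_irrel hr, mix_irrel hr]
  have i'q : ∀ c, i' q c = i q c := fun c => mix_rel hq c
  have j'q : ∀ c, j' q c = j q c := fun c => mix_rel hq c
  have hu' : hexec σ u ≠ hexec τ u := by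
    rw [← mix_value hW hF h1 hi hσ hiσ, ← mix_value hW hF h2 hj hτ hjτ]
    exact hu
  -- the new couple diverges at the old term `q(t)`
  obtain ⟨ρ', τ₁', τ₂', rfl, rfl, hρt⟩ : ∃ ρ' τ₁' τ₂', σ = ρ' ++ .prd q m args true :: τ₁' ∧
      τ = ρ' ++ .prd q m args false :: τ₂' ∧ args.map (hexec ρ') = t := by
    rcases runs_diverge hσ hτ hiσ hjτ with h | ⟨ρ', r, k, brgs, Y, c, d, hs, hs', e1, e2⟩
    · exact (hu' (by rw [h])).elim
    · have hpair : (r, brgs.map (hexec ρ')) = (q, t) := by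
        by_contra hn
        have := hoff' _ _ hn
        rw [e1, e2] at this
        cases Y <;> simp at this
      obtain ⟨rfl, hrt⟩ := Prod.mk.inj hpair
      have hz := letIn_of_path hσ (z := .prd r k brgs Y) (by rw [hs]; simp)
      have hz' := letIn_of_path hA (z := .prd r m args X) (by simp)
      obtain rfl : k = m := hP.label_unique hz.lsym hz'.lsym
      obtain rfl : brgs = args := by
        rcases letter_unique hW hz hz' rfl with ⟨_, _, _, _, h, -⟩ | ⟨_, _, _, _, _, h, h'⟩
        · cases h
        · cases h; cases h'; rfl
      rw [hrt, i'q, itq] at e1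
      subst e1
      exact ⟨ρ', c, d, hs, hs', hrt⟩
  have hT' : TailPair S u q τ₁' τ₂' := tailPair_of_couple hW hF hσ hτ hiσ hjτ
    (by rw [hρt]; exact hoff') hu'
  -- it first tests `q(t')`, hence reaches `q` twice
  obtain ⟨Y, hY⟩ : ∃ Y, i' q t' = Y := ⟨_, rfl⟩
  have hY' : j' q t' = Y := by rw [← hY, hoff' q t' (by simp [htt])]
  have hBq : (a ++ β ++ μ) ++ [.prd q m args Y] ∈ PrePaths S := by
    obtain ⟨d, hd⟩ := exists_flip hW hB Y
    apply PrePaths.of_append (b := d)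
    exact PrePaths.of_path (by simpa using hd)
  have agBq : ∀ {k : HInterp}, hAgrees k (a ++ β ++ μ) → k q t' = Y →
      hAgrees k ((a ++ β ++ μ) ++ [.prd q m args Y]) := by
    intro k h1 h2
    rw [hAgrees_iff] at h1 ⊢
    intro r c b hv
    rcases visFrom_append.1 hv with hv | hv
    · exact h1 r c b hv
    · obtain ⟨rfl, rfl, rfl⟩ := visFrom_single.1 hv
      exact h2
  obtain ⟨ψ, rfl⟩ : ∃ ψ, ρ' = (a ++ β ++ μ) ++ .prd q m args Y :: ψ := by
    obtain ⟨ξ, hξ⟩ := run_prefix hBq hσ (agBq hi'B hY) hiσ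
    rcases split_append hξ.symm with ⟨c, hc, -⟩ | ⟨c, hc, -⟩
    · exfalso
      have h3 := agBq hj'B hY'
      rw [hc] at h3
      have h4 := hAgrees_iff.1 h3 _ _ _ (visFrom_path.2 (Or.inr (Or.inl ⟨rfl, rfl, rfl⟩)))
      rw [hρt, j'q, jtq] at h4
      simp at h4
    · exact ⟨c, by rw [hc]; simp⟩
  -- terms visited outside `N` after `aβμ` already occur in the old tails
  have old : ∀ {z : List Letter} {k : HInterp}, (a ++ β ++ μ) ++ z ∈ Paths S →
      hAgrees (mix S u k (a ++ β ++ μ)) ((a ++ β ++ μ) ++ z) →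
      (∀ r c, (r, c) ≠ (q, t) → i r c = k r c) →
      ∀ r c, (∀ l, LSym.pr r l ∉ lsymSet N) → (r, c) ≠ (q, t) →
        VisFrom (a ++ β ++ μ) z r c true → (r, c) ∈ Cnt N (a ++ α ++ μ) τ₁ τ₂ := by
    intro z k hz hk hik r c hrN hrc hv
    have hnB : ∀ b, ¬ VisFrom [] (a ++ β ++ μ) r c b := fun b h =>
      noRepeat hW hF (PrePaths.of_path hz) h hv
    have hval := hAgrees_iff.1 hk r c true (visFrom_append.2 (Or.inr hv))
    have hr : Rel S u r := by
      by_contra hr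
      rw [mix_irrel hr, pathI_true] at hval
      exact hnB _ hval
    rw [mix_rel hr, ← hik r c hrc] at hval
    have hnA : ∀ b, ¬ VisFrom [] (a ++ α ++ μ) r c b := by
      intro b h
      rcases visFrom_append.1 h with h | h
      · rcases visFrom_append.1 h with h | h
        · exact hnB b (visFrom_append.2 (Or.inl (visFrom_append.2 (Or.inl h))))
        · obtain ⟨pre, k, brgs, post, rfl, -⟩ := h
          exact hrN k (lsym_of_path hα (z := .prd r k brgs b) (by simp))
      · exact hnB b (visFrom_append.2 (Or.inr (hsep.vis hα hβ hr h)))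
    refine ⟨hrN, ?_⟩
    rcases hsupp r c hval with h | h
    · rcases visFrom_path.1 h with h | ⟨rfl, rfl, -⟩ | h
      · exact (hnA _ h).elim
      · exact (hrc rfl).elim
      · exact Or.inl h
    · rcases visFrom_path.1 h with h | ⟨rfl, rfl, -⟩ | h
      · exact (hnA _ h).elim
      · exact (hrc rfl).elim
      · exact Or.inr h
  have hσ2 : (a ++ β ++ μ) ++ (.prd q m args Y :: ψ ++ .prd q m args true :: τ₁') ∈ Paths S := by
    simpa using hσ
  have hτ2 : (a ++ β ++ μ) ++ (.prd q m args Y :: ψ ++ .prd q m args false :: τ₂') ∈ Paths S := by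
    simpa using hτ
  have hiσ2 : hAgrees i' ((a ++ β ++ μ) ++
      (.prd q m args Y :: ψ ++ .prd q m args true :: τ₁')) := by simpa using hiσ
  have hjτ2 : hAgrees j' ((a ++ β ++ μ) ++
      (.prd q m args Y :: ψ ++ .prd q m args false :: τ₂')) := by simpa using hjτ
  have old₁ := old hσ2 (k := i) hiσ2 (fun _ _ _ => rfl)
  have old₂ := old hτ2 (k := j) hjτ2 hoff
  obtain ⟨wl, k, brgs, B, hmem, hO, hqB⟩ := loop_between hW (a := a ++ β ++ μ)
    (x := .prd q m args Y) (m := ψ) (y := .prd q m args true) (b := τ₁') hσ2 rfl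
  have hwN : ∀ k', LSym.pr wl k' ∉ lsymSet N := by
    intro k' hk'
    obtain rfl : k' = k := hP.label_unique (hN.lsymSet_subset hk') (hO.lsymSet_subset (Or.inl rfl))
    refine hqN m ((whil_occurs_of_mem hN hW hO hk').lsymSet_subset ?_)
    exact hqB.elim (fun h => Or.inl h) (fun h => Or.inr h)
  obtain ⟨s, s', hss⟩ := List.append_of_mem hmem
  have hwv : VisFrom (a ++ β ++ μ) (.prd q m args Y :: ψ) wl
      (brgs.map (hexec ((a ++ β ++ μ) ++ s))) true := ⟨s, k, brgs, s', hss, rfl⟩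
  generalize brgs.map (hexec ((a ++ β ++ μ) ++ s)) = cw at hwv
  refine ⟨τ₁', τ₂', hT', ?_⟩
  rw [← cnt_ncard_eq hF hL N hσ hτ]
  refine lt_of_lt_of_le (Set.ncard_lt_ncard ⟨?_, ?_⟩ (cnt_finite _ _ _ _))
    (cnt_ncard_le N (a ++ α ++ μ) τ₁ τ₂)
  · rintro ⟨r, c⟩ ⟨hrN, h | h⟩
    · refine old₁ r c hrN ?_ (visFrom_append.2 (Or.inr (visFrom_cons_prd.2 (Or.inr h))))
      intro he
      rw [← hρt] at he
      cases he
      exact noRepeat_tail hW hF hσ h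
    · refine old₂ r c hrN ?_ (visFrom_append.2 (Or.inr (visFrom_cons_prd.2 (Or.inr h))))
      intro he
      rw [← hρt] at he
      cases he
      exact noRepeat_tail hW hF hτ h
  · intro hsub
    have hw0 : VisFrom [] ((a ++ β ++ μ) ++ .prd q m args Y :: ψ) wl cw true :=
      visFrom_append.2 (Or.inr hwv)
    have hin := hsub (old₁ wl cw hwN (by
      intro he
      rw [← hρt] at he
      cases he
      exact noRepeat hW hF (PrePaths.of_path hσ) hw0 (visFrom_cons_prd.2 (Or.inl ⟨rfl, rfl, rfl⟩)))
      (visFrom_append.2 (Or.inl hwv)))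
    rcases hin.2 with h | h
    · exact noRepeat hW hF (PrePaths.of_path hσ) hw0 (visFrom_cons_prd.2 (Or.inr h))
    · exact noRepeat hW hF (PrePaths.of_path hτ) hw0 (visFrom_cons_prd.2 (Or.inr h))

/-- A statement guarded by an irrelevant predicate feeds no relevant predicate. -/
theorem no_feed {S : Schema} (hS : Special S) {u : ℕ} {N : Schema} (hN : Occurs N S)
    {p l : ℕ} (hnode : IsNode N p l) (hp : ¬ Rel S u p) :
    ∀ (k : ℕ) {a μ b₂ : List Letter} {q m : ℕ} {args : List ℕ} {X : Bool} {w v : ℕ},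
      μ.length = k →
      (∀ x ∈ Paths N, a ++ x ++ (μ ++ .prd q m args X :: b₂) ∈ Paths S) →
      Rel S u q → w ∈ args → VarIn v (hexec μ w) → AssignsTo N v → False := by
  intro k
  induction k using Nat.strong_induction_on with
  | _ k ih =>
  intro a μ b₂ q m args X w v hk hpath hq hw hvw hv
  -- a shortest feeding segment is separated from `N`
  have hsep : Sep S u N μ := by
    rintro μ₁ r m' args' X' μ₂ rfl hr w' hw' v' hv' hN'
    refine @ih μ₁.length (by rw [← hk]; simp) a μ₁ (μ₂ ++ .prd q m args X :: b₂) r m' args' X'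
      w' v' rfl ?_ hr hw' hv' hN'
    intro x hx
    simpa using hpath x hx
  have desc : ∀ (n : ℕ) {τ₁ τ₂ : List Letter}, (Cnt N [] τ₁ τ₂).ncard = n →
      TailPair S u q τ₁ τ₂ → False := by
    intro n
    induction n using Nat.strong_induction_on with
    | _ n ihn =>
    intro τ₁ τ₂ hn hT
    obtain ⟨τ₁', τ₂', hT', hlt⟩ := feed_descent hS hN hnode hp hpath hq hw hvw hv hsep hT
    exact ihn _ (hn ▸ hlt) rfl hT'
  obtain ⟨i, j, a', l', args', τ₁, τ₂, h1, h2, hi, hj, hoff, hu⟩ := rel_data hq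
  exact desc _ rfl (tailPair_of_couple hS.1 hS.2.2.1 h1 h2 hi hj hoff hu)

/-- A statement guarded by an irrelevant predicate does not feed the final value of `u`. -/
theorem no_feed_final {S : Schema} (hS : Special S) {u : ℕ} {N : Schema} (hN : Occurs N S)
    {p l : ℕ} (hnode : IsNode N p l) (hp : ¬ Rel S u p) {a μ : List Letter} {v : ℕ}
    (hpath : ∀ x ∈ Paths N, a ++ x ++ μ ∈ Paths S) (hvu : VarIn v (hexec μ u))
    (hv : AssignsTo N v) : False := by
  have hsep : Sep S u N μ := by
    rintro μ₁ r m' args' X' μ₂ rfl hr w' hw' v' hv' hN'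
    exact no_feed hS hN hnode hp _ rfl hpath hr hw' hv' hN'
  obtain ⟨hW, hP, hF, hL, hI⟩ := hS
  have hpre : ∀ x ∈ Paths N, a ++ x ∈ PrePaths S := fun x hx =>
    PrePaths.of_append (PrePaths.of_path (hpath x hx))
  obtain ⟨α, hα, hnp⟩ := node_paths hW hF hI hN hnode hv
  have hi := pathI_agrees hF (PrePaths.of_path (hpath α hα))
  obtain ⟨β, hβ, hne, hiβ⟩ := hnp a _ hpre (pathI_finSupp (a ++ α ++ μ))
  have hj := mix_agrees hF hp hα hβ hsep hi hiβ (PrePaths.of_path (hpath β hβ))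
  have h3 := mix_value hW hF (hpath α hα) hi (hpath β hβ) hj
  rw [hexec_append, hexec_append] at h3
  refine hvu.subst_ne ?_ h3
  exact fun h4 => hne (cancel hF hL _ le_rfl (hpre α hα) (hpre β hβ) v v h4)

/-! ### Induction over the set of needed symbols -/

/-- The property carried through the induction over `Need`: a needed predicate is relevant, and
along some path a needed assignment feeds a relevant predicate or the final value of `u`. -/
def Useful (S : Schema) (u : ℕ) : LSym → Prop
  | .pr q _ => Rel S u q
  | .fn f l => ∃ a y args μ,
      (∃ q m brgs X b w, a ++ .asn y f l args :: (μ ++ .prd q m brgs X :: b) ∈ Paths S ∧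
        Rel S u q ∧ w ∈ brgs ∧ VarIn y (hexec μ w)) ∨
      (a ++ .asn y f l args :: μ ∈ Paths S ∧ VarIn y (hexec μ u))

theorem useful_of_depFV {S : Schema} {u f l : ℕ} (h : DepFV S (f, l) u) : Useful S u (.fn f l) := by
  obtain ⟨σ, ⟨a, ha⟩, hσ⟩ := h
  obtain ⟨ts, hts⟩ := isFLTrm_single hσ
  obtain ⟨σ₁, args, σ₂, rfl, hn, -⟩ := lexec_app hts
  refine ⟨a ++ σ₁, u, args, σ₂, Or.inr ⟨by simpa using ha, ?_⟩⟩
  rw [hn.hexec]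
  exact .here

theorem useful_of_depFP {S : Schema} {u f l q m : ℕ} (h : DepFP S (f, l) q m) (hq : Rel S u q) :
    Useful S u (.fn f l) := by
  obtain ⟨σ, brgs, Z, ⟨a, b, hab⟩, w, hw, hσ⟩ := h
  obtain ⟨ts, hts⟩ := isFLTrm_single hσ
  obtain ⟨σ₁, args, σ₂, rfl, hn, -⟩ := lexec_app hts
  refine ⟨a ++ σ₁, w, args, σ₂, Or.inl ⟨q, m, brgs, Z, b, w, by simpa using hab, hq, hw, ?_⟩⟩
  rw [hn.hexec]
  exact .here

theorem useful_of_depFF {S : Schema} (hW : WellLabelled S) {u f l g m : ℕ}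
    (h : DepFF S (f, l) (g, m)) (hg : Useful S u (.fn g m)) : Useful S u (.fn f l) := by
  obtain ⟨σ, ⟨a, b, hab⟩, w, hσ⟩ := h
  obtain ⟨ts, ss, hts, hss⟩ := isFLTrm_pair hσ
  obtain ⟨σ₁, args, σ₂, rfl, -, rfl⟩ := lexec_app hts
  obtain ⟨v, hv, hvss⟩ := List.mem_map.1 hss
  obtain ⟨ρ₁, brgs, ρ₂, rfl, hn, -⟩ := lexec_app hvss
  have h1 : (a ++ ρ₁ ++ .asn v f l brgs :: ρ₂) ++ .asn w g m args :: (σ₂ ++ b) ∈ Paths S := by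
    simpa using hab
  -- a path reaching `g` through `f` is continued by a path on which `g` is useful
  have glue : ∀ {a' y crgs τ}, a' ++ .asn y g m crgs :: τ ∈ Paths S →
      y = w ∧ a ++ ρ₁ ++ .asn v f l brgs :: (ρ₂ ++ .asn w g m args :: τ) ∈ Paths S := by
    intro a' y crgs τ h'
    rcases letter_unique hW (letIn_of_path h' (z := .asn y g m crgs) (by simp))
      (letIn_of_path h1 (z := .asn w g m args) (by simp)) rfl with
      ⟨_, _, _, _, h2, h3⟩ | ⟨_, _, _, _, _, h2, -⟩
    · cases h2; cases h3
      exact ⟨rfl, by simpa using splice hW h1 h' rfl⟩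
    · cases h2
  have feed : ∀ {μ z}, VarIn w (hexec μ z) → VarIn v (hexec (ρ₂ ++ .asn w g m args :: μ) z) := by
    intro μ z hz
    rw [show ρ₂ ++ .asn w g m args :: μ = (ρ₂ ++ [.asn w g m args]) ++ μ by simp, hexec_append]
    refine hz.subst ?_
    rw [hexec_last (fun _ _ _ h => by simp at h)]
    refine .there (List.mem_map.2 ⟨v, hv, rfl⟩) ?_
    rw [hn.hexec]
    exact .here
  obtain ⟨a', y, crgs, μ, ⟨q, k, drgs, X, c, z, hp, hq, hz, hy⟩ | ⟨hp, hy⟩⟩ := hg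
  · obtain ⟨rfl, h2⟩ := glue hp
    exact ⟨a ++ ρ₁, v, brgs, ρ₂ ++ .asn y g m args :: μ, Or.inl ⟨q, k, drgs, X, c, z,
      by simpa using h2, hq, hz, feed hy⟩⟩
  · obtain ⟨rfl, h2⟩ := glue hp
    exact ⟨a ++ ρ₁, v, brgs, ρ₂ ++ .asn y g m args :: μ, Or.inr ⟨h2, feed hy⟩⟩

/-- A variable whose value at the end of a path through `N` depends on a variable assigned in `N`
is itself assigned in `N`. -/
theorem assignsTo_of_varIn {N : Schema} {x₁ x₂ : List Letter} {y f l v : ℕ} {args : List ℕ}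
    (h : x₁ ++ .asn y f l args :: x₂ ∈ Paths N) (hv : VarIn y (hexec x₂ v)) : AssignsTo N v := by
  by_contra hn
  have h1 := noAsn_of_not_assignsTo hn h
  have h2 : NoAsn x₂ v := fun f l args hm => h1 f l args (by simp [hm])
  rw [h2.hexec] at hv
  cases hv
  exact h1 f l args (by simp)

theorem rel_of_controls_fn {S : Schema} (hS : Special S) {u p l f m : ℕ}
    (hc : ControlsL S p l (.fn f m)) (hf : Useful S u (.fn f m)) : Rel S u p := by
  by_contra hp
  obtain ⟨N, hN, hnode, hfN⟩ : ∃ N, Occurs N S ∧ IsNode N p l ∧ LSym.fn f m ∈ lsymSet N := by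
    rcases hc with ⟨args, t, e, hO, h⟩ | ⟨args, B, hO, h⟩
    · exact ⟨_, hO, Or.inl ⟨_, _, _, rfl⟩, Or.inr h⟩
    · exact ⟨_, hO, Or.inr ⟨_, _, rfl⟩, Or.inr h⟩
  obtain ⟨a, y, args, μ, ⟨q, k, brgs, X, b, w, hpath, hq, hw, hy⟩ | ⟨hpath, hy⟩⟩ := hf
  · obtain ⟨a₀, x₁, x₂, b₀, rfl, hb, hx, hall⟩ := node_decomp hN hS.1 hpath hfN
    rcases split_append hb with ⟨c, rfl, -⟩ | ⟨c, rfl, rfl⟩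
    · -- the relevant predicate lies inside `N`
      have hqN : LSym.pr q k ∈ lsymSet N := lsym_of_path hx (z := .prd q k brgs X) (by simp)
      rcases hnode.controls hN hqN with h | h
      · cases h; exact hp hq
      · exact hp (rel_of_controls hS.1 hS.2.1 hS.2.2.1 h hq)
    · rw [hexec_append] at hy
      obtain ⟨v, hv, hyv⟩ := VarIn.of_subst _ hy
      exact no_feed hS hN hnode hp _ rfl hall hq hw hv (assignsTo_of_varIn hx hyv)
  · obtain ⟨a₀, x₁, x₂, b₀, rfl, rfl, hx, hall⟩ := node_decomp hN hS.1 hpath hfN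
    rw [hexec_append] at hy
    obtain ⟨v, hv, hyv⟩ := VarIn.of_subst _ hy
    exact no_feed_final hS hN hnode hp hall hv (assignsTo_of_varIn hx hyv)

theorem useful_of_need {S : Schema} (hS : Special S) {u : ℕ} {x : LSym}
    (h : Need S (Crit.var u) x) : Useful S u x := by
  generalize hc : Crit.var u = c at h
  induction h with
  | ofVar h => cases hc; exact useful_of_depFV h
  | ofOmega h => cases hc
  | @ofDep c f l x _ hd ih =>
    cases x with
    | fn g m => exact useful_of_depFF hS.1 hd (ih hc)
    | pr q m => exact useful_of_depFP hd (ih hc)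
  | @ofControl c p l x _ hd ih =>
    cases x with
    | fn g m => exact rel_of_controls_fn hS hd (ih hc)
    | pr q m => exact rel_of_controls hS.1 hS.2.1 hS.2.2.1 hd (ih hc)

/-- Theorem 26(1) / need.thm: for a special schema S and a
variable u, every predicate symbol with a labelled occurrence in `Need_S(u)`
admits a pu-couple for S. -/
theorem need_predicate_has_couple (S : Schema) (hS : Special S) (u p : ℕ)
    (h : ∃ l, Need S (Crit.var u) (LSym.pr p l)) :
    ∃ i j : HInterp, PUCouple S p u i j := by
  obtain ⟨l, hl⟩ := h
  exact useful_of_need hS hl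

end SchemaSlicing
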